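/- arXiv:1109.3761 — 2 statements merged into one kernel-verified Lean document; each statement's English description precedes it below -/
import Mathlib

section
/- Suppose P is a minimal graded projective resolution of the trivial A-module A_0 in which each P_n is finitely generated with generators in degree δ^d_p(n). If i, j ∈ ℕ satisfy δ^d_p(i+j) = δ^d_p(i) + δ^d_p(j), then the Yoneda multiplication map Ext^i_A(A_0,A_0) ⊗_F Ext^j_A(A_0,A_0) → Ext^{i+j}_A(A_0,A_0) is surjective; moreover Ext^{i+j}_A(A_0,A_0) = Ext^i_A(A_0,A_0)·Ext^j_A(A_0,A_0) = Ext^j_A(A_0,A_0)·Ext^i_A(A_0,A_0). -/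
noncomputable section

/-- The jump function `δ^d_p(n) = ((n − (n mod p))/p)·d + (n mod p)`. -/
def jump (d p n : ℕ) : ℕ := (n - n % p) / p * d + n % p

/-- A positively graded `F`-algebra `A = ⊕_{i≥0} A_i`. -/
structure GradedAlg (F : Type) [Field F] where
  A : Type
  [ringA : Ring A]
  [algA : Algebra F A]
  grading : ℕ → Submodule F A
  [graded : GradedAlgebra grading]

attribute [instance] GradedAlg.ringA GradedAlg.algA GradedAlg.graded

namespace GradedAlg

variable {F : Type} [Field F] (𝒜 : GradedAlg F)

/-- The graded Jacobson radical `J = ⊕_{i≥1} A_i`, i.e. the irrelevant ideal. -/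
def jideal : Ideal 𝒜.A := (HomogeneousIdeal.irrelevant 𝒜.grading).toIdeal

/-- The standing assumptions: `A_0` is a semisimple Artin algebra, `A` is generated in
degrees 0 and 1 (`A_i · A_j = A_{i+j}`), and `A_1` is finite dimensional over `F`. -/
structure Standing : Prop where
  semisimple : IsSemisimpleRing ↥(𝒜.grading 0)
  artinian : IsArtinianRing ↥(𝒜.grading 0)
  gen01 : ∀ i j : ℕ, 𝒜.grading i * 𝒜.grading j = 𝒜.grading (i + j)
  findim : FiniteDimensional F ↥(𝒜.grading 1)

/-- A (ℤ-)graded module over the graded algebra `𝒜`. -/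
structure GMod where
  M : Type
  [acg : AddCommGroup M]
  [modF : Module F M]
  [modA : Module 𝒜.A M]
  [tower : IsScalarTower F 𝒜.A M]
  [scomm : SMulCommClass 𝒜.A F M]
  grading : ℤ → Submodule F M
  sup_eq_top : (⨆ j : ℤ, grading j) = ⊤
  indep : iSupIndep grading
  smul_mem : ∀ {i : ℕ} {j : ℤ} {a : 𝒜.A} {m : M},
    a ∈ 𝒜.grading i → m ∈ grading j → a • m ∈ grading ((i : ℤ) + j)

attribute [instance] GMod.acg GMod.modF GMod.modA GMod.tower GMod.scomm

variable {𝒜}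

/-- A degree-zero morphism of graded modules. -/
structure GHom (M N : 𝒜.GMod) where
  lin : M.M →ₗ[𝒜.A] N.M
  grad : ∀ (j : ℤ) (x : M.M), x ∈ M.grading j → lin x ∈ N.grading j

/-- A graded module is generated in degree `s` if `A · M_s = M`. -/
def GMod.GenInDeg (M : 𝒜.GMod) (s : ℤ) : Prop :=
  Submodule.span 𝒜.A (M.grading s : Set M.M) = ⊤

/-- `T` is the trivial graded module `A_0 = A/J`, concentrated in degree `0`. -/
def IsTrivialGMod (T : 𝒜.GMod) : Prop :=
  (∀ j : ℤ, j ≠ 0 → T.grading j = ⊥) ∧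
    Nonempty (T.M ≃ₗ[𝒜.A] (𝒜.A ⧸ 𝒜.jideal))

/-- A minimal graded projective resolution
`⋯ → P_{n+1} → P_n → ⋯ → P_0 → M → 0` of the graded module `M`,
with finitely generated terms. -/
structure MinRes (M : 𝒜.GMod) where
  P : ℕ → 𝒜.GMod
  d : ∀ n : ℕ, GHom (P (n + 1)) (P n)
  aug : GHom (P 0) M
  fg : ∀ n, Module.Finite 𝒜.A (P n).M
  projective : ∀ n, Module.Projective 𝒜.A (P n).M
  aug_surj : Function.Surjective aug.lin
  exact_aug : LinearMap.range (d 0).lin = LinearMap.ker aug.lin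
  exact : ∀ n, LinearMap.range (d (n + 1)).lin = LinearMap.ker (d n).lin
  minimal : ∀ n, LinearMap.range (d n).lin ≤ 𝒜.jideal • (⊤ : Submodule 𝒜.A (P n).M)

variable (𝒜)

/-- `M` is a piecewise-Koszul module (period `p`, jump degree `d`, shift `s`):
it has a minimal graded projective resolution with `P_n` generated in degree `δ^d_p(n) + s`. -/
def IsPKMod (p d : ℕ) (s : ℤ) (M : 𝒜.GMod) : Prop :=
  ∃ R : MinRes M, ∀ n : ℕ, (R.P n).GenInDeg ((jump d p n : ℤ) + s)

/-- `A` is a piecewise-Koszul algebra (period `p`, jump degree `d`): the trivial module `T`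
admits a minimal graded projective resolution with `P_n` generated in degree `δ^d_p(n)`. -/
def IsPKAlg (p d : ℕ) (T : 𝒜.GMod) : Prop := IsPKMod 𝒜 p d 0 T

/-- A Koszul module: a minimal graded projective resolution with `P_n` generated in degree `n`. -/
def IsKoszulMod (M : 𝒜.GMod) : Prop :=
  ∃ R : MinRes M, ∀ n : ℕ, (R.P n).GenInDeg (n : ℤ)

variable {𝒜}

section Ext

variable (T : 𝒜.GMod) {M : 𝒜.GMod}

/-- The space of `A`-linear maps `P_n → T` (cochains). -/
abbrev HomSp (R : MinRes M) (n : ℕ) := (R.P n).M →ₗ[𝒜.A] T.M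

/-- Precomposition, as an `F`-linear map on cochains. -/
def precompF {M₁ M₂ : 𝒜.GMod} (g : M₁.M →ₗ[𝒜.A] M₂.M) :
    (M₂.M →ₗ[𝒜.A] T.M) →ₗ[F] (M₁.M →ₗ[𝒜.A] T.M) where
  toFun f := f ∘ₗ g
  map_add' f₁ f₂ := by ext x; simp
  map_smul' c f := by ext x; simp

/-- Cocycles: maps `P_n → T` vanishing on the image of `P_{n+1}`. -/
def cocyc (R : MinRes M) (n : ℕ) : Submodule F (HomSp T R n) :=
  LinearMap.ker (precompF T (R.d n).lin)

/-- Coboundaries: maps `P_n → T` factoring through `d_{n-1}`. -/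
def cobound (R : MinRes M) : (n : ℕ) → Submodule F (HomSp T R n)
  | 0 => ⊥
  | n + 1 => LinearMap.range (precompF T (R.d n).lin)

/-- The coboundaries, viewed inside the cocycles. -/
def extRel (R : MinRes M) (n : ℕ) : Submodule F ↥(cocyc T R n) :=
  (cobound T R n).comap (cocyc T R n).subtype

/-- `Ext^n_A(M, T)`, computed from the resolution `R` of `M`. -/
abbrev ExtQ (R : MinRes M) (n : ℕ) := ↥(cocyc T R n) ⧸ extRel T R n

/-- The class in `Ext^n_A(M,T)` of a cocycle. -/
def extCls {R : MinRes M} {n : ℕ} {f : HomSp T R n} (hf : f ∈ cocyc T R n) :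
    ExtQ T R n :=
  Submodule.Quotient.mk ⟨f, hf⟩

/-- Cochains of shift-degree `j`: maps `P_n → T` vanishing on every `(P_n)_i` with `i ≠ j`. -/
def homDeg (R : MinRes M) (n : ℕ) (j : ℤ) : Submodule F (HomSp T R n) where
  carrier := {f | ∀ i : ℤ, i ≠ j → ∀ x ∈ (R.P n).grading i, f x = 0}
  add_mem' := fun hf hg i hi x hx => by
    simp only [LinearMap.add_apply, hf i hi x hx, hg i hi x hx, add_zero]
  zero_mem' := fun i hi x hx => rfl
  smul_mem' := fun c f hf i hi x hx => by
    simp only [LinearMap.smul_apply, hf i hi x hx, smul_zero]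

/-- The shift-degree `j` component `Ext^n_A(M,T)_j`. -/
def extComp (R : MinRes M) (n : ℕ) (j : ℤ) : Submodule F (ExtQ T R n) :=
  Submodule.map (extRel T R n).mkQ ((homDeg T R n j).comap (cocyc T R n).subtype)

/-- Transport `Ext` along an equality of cohomological degrees. -/
def extCast (R : MinRes M) {a b : ℕ} (h : a = b) : ExtQ T R a ≃ₗ[F] ExtQ T R b :=
  h ▸ LinearEquiv.refl F (ExtQ T R a)

/-- A chain map lifting of a cochain `g : P_j → T` over the resolutions `RM` of `M`
and `RT` of `T`. -/
structure ChainLift (RT : MinRes T) (RM : MinRes M) (j : ℕ)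
    (g : (RM.P j).M →ₗ[𝒜.A] T.M) where
  ℓ : ∀ m k : ℕ, m = k + j → ((RM.P m).M →ₗ[𝒜.A] (RT.P k).M)
  comm_aug : RT.aug.lin ∘ₗ ℓ j 0 (by omega) = g
  comm : ∀ k : ℕ, (RT.d k).lin ∘ₗ ℓ (k + j + 1) (k + 1) (by omega) =
    ℓ (k + j) k rfl ∘ₗ (RM.d (k + j)).lin

/-- `μ` is the (bigraded family of) Yoneda product(s)
`Ext^i(T,T) ⊗ Ext^j(M,T) → Ext^{i+j}(M,T)`: it is computed by composing a cocycle
`f : P_i → T` with a chain lifting of a cocycle `g : Q_j → T`. -/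
def IsYonedaMul (RT : MinRes T) (RM : MinRes M)
    (μ : ∀ i j : ℕ, ExtQ T RT i →ₗ[F] ExtQ T RM j →ₗ[F] ExtQ T RM (i + j)) : Prop :=
  ∀ (i j : ℕ) (f : HomSp T RT i) (hf : f ∈ cocyc T RT i)
    (g : HomSp T RM j) (hg : g ∈ cocyc T RM j)
    (L : ChainLift T RT RM j g)
    (hc : f ∘ₗ L.ℓ (i + j) i (by omega) ∈ cocyc T RM (i + j)),
    μ i j (extCls T hf) (extCls T hg) = extCls T hc

/-- `E(A) = Ext^*_A(A_0,A_0)` is generated in the ext-degrees belonging to `S`. -/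
def ExtGenIn (RT : MinRes T)
    (μ : ∀ i j : ℕ, ExtQ T RT i →ₗ[F] ExtQ T RT j →ₗ[F] ExtQ T RT (i + j))
    (S : Set ℕ) : Prop :=
  ∀ W : (n : ℕ) → Submodule F (ExtQ T RT n),
    (∀ n ∈ S, W n = ⊤) →
    (∀ (i j : ℕ) (x : ExtQ T RT i) (y : ExtQ T RT j),
      x ∈ W i → y ∈ W j → μ i j x y ∈ W (i + j)) →
    ∀ n, W n = ⊤

/-- `E(M) = Ext^*_A(M,A_0)` is generated in degree `0` as a graded `E(A)`-module. -/
def ExtModGenInZero (RT : MinRes T) (RM : MinRes M)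
    (μ : ∀ i j : ℕ, ExtQ T RT i →ₗ[F] ExtQ T RM j →ₗ[F] ExtQ T RM (i + j)) : Prop :=
  ∀ W : (n : ℕ) → Submodule F (ExtQ T RM n),
    W 0 = ⊤ →
    (∀ (i j : ℕ) (x : ExtQ T RT i) (y : ExtQ T RM j),
      y ∈ W j → μ i j x y ∈ W (i + j)) →
    ∀ n, W n = ⊤

end Ext

/-- `JM` is (a graded module isomorphic to) the submodule `J·M` of `M`. -/
def IsJM (M JM : 𝒜.GMod) : Prop :=
  ∃ e : JM.M ≃ₗ[𝒜.A] ↥(𝒜.jideal • (⊤ : Submodule 𝒜.A M.M)),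
    ∀ (j : ℤ) (x : JM.M), x ∈ JM.grading j ↔ ((e x : M.M) ∈ M.grading j)

/-- `Q` is (a graded module isomorphic to) the quotient `M/JM`. -/
def IsQuotJM (M Q : 𝒜.GMod) : Prop :=
  ∃ e : Q.M ≃ₗ[𝒜.A] (M.M ⧸ (𝒜.jideal • (⊤ : Submodule 𝒜.A M.M))),
    ∀ j : ℤ, Q.grading j = Submodule.map
      ((e.symm.toLinearMap ∘ₗ (𝒜.jideal • (⊤ : Submodule 𝒜.A M.M)).mkQ).restrictScalars F)
      (M.grading j)

/-- `W` is (isomorphic to) the `n`-th syzygy `Ω^n(M)` of `M` in the minimal graded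
projective resolution `R`. -/
def IsSyzygy {M : 𝒜.GMod} (R : MinRes M) : ℕ → 𝒜.GMod → Prop
  | 0, W => ∃ e : W.M ≃ₗ[𝒜.A] M.M,
      ∀ (j : ℤ) (x : W.M), x ∈ W.grading j ↔ e x ∈ M.grading j
  | 1, W => ∃ e : W.M ≃ₗ[𝒜.A] ↥(LinearMap.ker R.aug.lin),
      ∀ (j : ℤ) (x : W.M), x ∈ W.grading j ↔ ((e x : (R.P 0).M) ∈ (R.P 0).grading j)
  | (n + 2), W => ∃ e : W.M ≃ₗ[𝒜.A] ↥(LinearMap.ker (R.d n).lin),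
      ∀ (j : ℤ) (x : W.M), x ∈ W.grading j ↔ ((e x : (R.P (n + 1)).M) ∈ (R.P (n + 1)).grading j)

end GradedAlg

namespace PKAux

section Ungraded

variable {A : Type} [Ring A]

/-- An augmented projective resolution, `X 0` being the resolved module. -/
structure Res (A : Type) [Ring A] where
  X : ℕ → ModuleCat.{0} A
  d : ∀ n, X (n + 1) →ₗ[A] X n
  surj : Function.Surjective (d 0)
  dd : ∀ n x, d n (d (n + 1) x) = 0
  ex : ∀ n x, d n x = 0 → ∃ y, d (n + 1) y = x
  proj : ∀ n, Module.Projective A (X (n + 1))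

lemma proj_lift {P M N : Type} [AddCommGroup P] [AddCommGroup M] [AddCommGroup N]
    [Module A P] [Module A M] [Module A N] [Module.Projective A P]
    (f : M →ₗ[A] N) (g : P →ₗ[A] N) (h : ∀ x, ∃ y, f y = g x) :
    ∃ l : P →ₗ[A] M, ∀ x, f (l x) = g x := by
  obtain ⟨l, hl⟩ := Module.projective_lifting_property f.rangeRestrict
    (g.codRestrict (LinearMap.range f) (fun x => h x)) f.surjective_rangeRestrict
  refine ⟨l, fun x => ?_⟩
  exact congrArg Subtype.val (LinearMap.congr_fun hl x)

lemma Res.lift (R S : Res A) (φ : R.X 0 →ₗ[A] S.X 0) :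
    ∃ f : ∀ n, R.X n →ₗ[A] S.X n, f 0 = φ ∧
      ∀ n x, S.d n (f (n + 1) x) = f n (R.d n x) := by
  let Q : ℕ → Type := fun n =>
    {p : (R.X n →ₗ[A] S.X n) × (R.X (n + 1) →ₗ[A] S.X (n + 1)) //
      ∀ x, S.d n (p.2 x) = p.1 (R.d n x)}
  have h0 : ∃ q : Q 0, q.1.1 = φ := by
    have := R.proj 0
    obtain ⟨l, hl⟩ := proj_lift (S.d 0) (φ ∘ₗ R.d 0) (fun x => S.surj _)
    exact ⟨⟨(φ, l), hl⟩, rfl⟩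
  have hs : ∀ n (q : Q n), ∃ q' : Q (n + 1), q'.1.1 = q.1.2 := by
    intro n q
    have := R.proj (n + 1)
    obtain ⟨l, hl⟩ := proj_lift (S.d (n + 1)) (q.1.2 ∘ₗ R.d (n + 1)) (fun x => by
      apply S.ex
      rw [LinearMap.comp_apply, q.2, R.dd, map_zero])
    exact ⟨⟨(q.1.2, l), hl⟩, rfl⟩
  obtain ⟨q0, hq0⟩ := h0
  choose nx hnx using hs
  let sq : ∀ n, Q n := fun n => Nat.rec q0 (fun n q => nx n q) n
  refine ⟨fun n => (sq n).1.1, hq0, fun n x => ?_⟩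
  have h1 : (sq (n + 1)).1.1 = (sq n).1.2 := hnx n (sq n)
  change S.d n ((sq (n + 1)).1.1 x) = _
  rw [h1]
  exact (sq n).2 x

lemma Res.homotopy (R S : Res A) (f : ∀ n, R.X n →ₗ[A] S.X n) (f0 : f 0 = 0)
    (hf : ∀ n x, S.d n (f (n + 1) x) = f n (R.d n x)) :
    ∃ s : ∀ n, R.X n →ₗ[A] S.X (n + 1),
      ∀ n x, f (n + 1) x = S.d (n + 1) (s (n + 1) x) + s n (R.d n x) := by
  let Q : ℕ → Type := fun n =>
    {s : R.X n →ₗ[A] S.X (n + 1) // ∀ x, S.d n (s (R.d n x)) = f n (R.d n x)}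
  let q0 : Q 0 := ⟨0, fun x => by simp [f0]⟩
  have hs : ∀ n (q : Q n), ∃ q' : Q (n + 1),
      ∀ x, S.d (n + 1) (q'.1 x) = f (n + 1) x - q.1 (R.d n x) := by
    intro n q
    have := R.proj n
    obtain ⟨l, hl⟩ := proj_lift (S.d (n + 1)) (f (n + 1) - q.1 ∘ₗ R.d n) (fun x => by
      apply S.ex
      rw [LinearMap.sub_apply, map_sub, hf, LinearMap.comp_apply, q.2, sub_self])
    exact ⟨⟨l, fun x => by rw [hl]; simp [R.dd]⟩, fun x => by rw [hl]; rfl⟩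
  choose nx hnx using hs
  let sq : ∀ n, Q n := fun n => Nat.rec q0 (fun n q => nx n q) n
  refine ⟨fun n => (sq n).1, fun n x => ?_⟩
  have h1 : S.d (n + 1) ((sq (n + 1)).1 x) = f (n + 1) x - (sq n).1 (R.d n x) := hnx n (sq n) x
  rw [h1]; simp

section Cone

variable (R R' : Res A) (ι : ∀ n, R'.X n →ₗ[A] R.X n) (S : Type) [AddCommGroup S] [Module A S]

abbrev coneX : ℕ → ModuleCat.{0} A
  | 0 => ModuleCat.of A S
  | 1 => R.X 1
  | n + 2 => ModuleCat.of A (R.X (n + 2) × R'.X (n + 1))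

variable (q : R.X 0 →ₗ[A] S)

def coneD : ∀ n, coneX R R' S (n + 1) →ₗ[A] coneX R R' S n
  | 0 => q ∘ₗ R.d 0
  | 1 => (R.d 1).coprod (ι 1)
  | n + 2 => ((R.d (n + 2)).coprod (ι (n + 2))).prod (-(R'.d (n + 1) ∘ₗ LinearMap.snd A _ _))

def coneRes (hι : ∀ n x, R.d n (ι (n + 1) x) = ι n (R'.d n x))
    (inj : Function.Injective (ι 0)) (hq : Function.Surjective q)
    (hex : ∀ x, q x = 0 ↔ ∃ y, ι 0 y = x) : Res A where
  X := coneX R R' S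
  d := coneD R R' ι S q
  surj := hq.comp R.surj
  dd := by
    rintro (_ | _ | n) x
    · change q (R.d 0 (R.d 1 x.1 + ι 1 x.2)) = 0
      rw [map_add, R.dd, hι, zero_add, (hex _).2 ⟨_, rfl⟩]
    · change R.d 1 (R.d 2 x.1 + ι 2 x.2) + ι 1 (-(R'.d 1 x.2)) = 0
      rw [map_add, R.dd, hι, map_neg]; simp
    · refine Prod.ext ?_ ?_
      · change R.d (n + 2) (R.d (n + 3) x.1 + ι (n + 3) x.2) + ι (n + 2) (-(R'.d (n + 2) x.2)) = 0
        rw [map_add, R.dd, hι, map_neg]; simp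
      · change -(R'.d (n + 1) (-(R'.d (n + 2) x.2))) = 0
        rw [map_neg, R'.dd]; simp
  ex := by
    rintro (_ | _ | n) x hx
    · change q (R.d 0 x) = 0 at hx
      obtain ⟨y, hy⟩ := (hex _).1 hx
      obtain ⟨y, rfl⟩ := R'.surj y
      obtain ⟨z, hz⟩ := R.ex 0 (x - ι 1 y) (by rw [map_sub, hι, hy, sub_self])
      refine ⟨(z, y), ?_⟩
      change R.d 1 z + ι 1 y = x
      rw [hz]; simp
    · change R.d 1 x.1 + ι 1 x.2 = 0 at hx
      have h1 : R'.d 0 x.2 = 0 := by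
        apply inj
        rw [← hι, map_zero]
        have := congrArg (R.d 0) hx
        rwa [map_add, R.dd, zero_add, map_zero] at this
      obtain ⟨y, hy⟩ := R'.ex 0 _ h1
      obtain ⟨z, hz⟩ := R.ex 1 (x.1 + ι 2 y) (by rw [map_add, hι, hy, hx])
      refine ⟨(z, -y), Prod.ext ?_ ?_⟩
      · change R.d 2 z + ι 2 (-y) = x.1
        rw [hz]; simp
      · change -(R'.d 1 (-y)) = x.2
        rw [map_neg, hy]; simp
    · have hx1 : R.d (n + 2) x.1 + ι (n + 2) x.2 = 0 := congrArg Prod.fst hx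
      have hx2 : -(R'.d (n + 1) x.2) = 0 := congrArg Prod.snd hx
      obtain ⟨y, hy⟩ := R'.ex (n + 1) _ (neg_eq_zero.1 hx2)
      obtain ⟨z, hz⟩ := R.ex (n + 2) (x.1 + ι (n + 3) y) (by rw [map_add, hι, hy, hx1])
      refine ⟨(z, -y), Prod.ext ?_ ?_⟩
      · change R.d (n + 3) z + ι (n + 3) (-y) = x.1
        rw [hz]; simp
      · change -(R'.d (n + 2) (-y)) = x.2
        rw [map_neg, hy]; simp
  proj := by
    rintro (_ | n)
    · exact R.proj 0
    · have := R.proj (n + 1)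
      have := R'.proj n
      change Module.Projective A (R.X (n + 2) × R'.X (n + 1))
      infer_instance

/-- The inclusion of the target into the cone. -/
def coneInc : ∀ n, R.X n →ₗ[A] coneX R R' S n
  | 0 => q
  | 1 => LinearMap.id
  | _ + 2 => LinearMap.inl A _ _

lemma coneInc_comm : ∀ n x, coneD R R' ι S q n (coneInc R R' S q (n + 1) x) =
    coneInc R R' S q n (R.d n x) := by
  rintro (_ | _ | n) x
  · rfl
  · change R.d 1 x + ι 1 0 = R.d 1 x
    simp
  · refine Prod.ext ?_ ?_
    · change R.d (n + 2) x + ι (n + 2) 0 = R.d (n + 2) x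
      simp
    · change -(R'.d (n + 1) 0) = 0
      simp

/-- The key extension argument. -/
lemma cone_key (hι : ∀ n x, R.d n (ι (n + 1) x) = ι n (R'.d n x))
    (inj : Function.Injective (ι 0)) (hq : Function.Surjective q)
    (hex : ∀ x, q x = 0 ↔ ∃ y, ι 0 y = x)
    (Y : Res A) (r : Y.X 0 →ₗ[A] S) (α : ∀ n, R.X n →ₗ[A] Y.X n)
    (hα : ∀ n x, Y.d n (α (n + 1) x) = α n (R.d n x))
    (hr : ∀ x, r (α 0 x) = q x)
    {T : Type} [AddCommGroup T] [Module A T] (m : ℕ)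
    (h : R.X (m + 2) →ₗ[A] T) (hh : ∀ x, h (R.d (m + 2) x) = 0)
    (k : R'.X (m + 1) →ₗ[A] T) (hk : ∀ y, h (ι (m + 2) y) = k (R'.d (m + 1) y)) :
    ∃ (φ : Y.X (m + 2) →ₗ[A] T) (κ : R.X (m + 1) →ₗ[A] T),
      ∀ x, h x = φ (α (m + 2) x) + κ (R.d (m + 1) x) := by
  let C := coneRes R R' ι S q hι inj hq hex
  obtain ⟨β, β0, hβ⟩ := Y.lift C r
  let J : ∀ n, R.X n →ₗ[A] C.X n := coneInc R R' S q
  have hJ : ∀ n x, C.d n (J (n + 1) x) = J n (R.d n x) := coneInc_comm R R' ι S q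
  have hJ0 : ∀ x, β 0 (α 0 x) = J 0 x := by
    intro x
    rw [β0]
    exact hr x
  obtain ⟨s, hs⟩ := R.homotopy C (fun n => β n ∘ₗ α n - J n)
    (by
      ext x
      rw [LinearMap.sub_apply, LinearMap.comp_apply, hJ0, sub_self, LinearMap.zero_apply])
    (by
      intro n x
      simp only [LinearMap.sub_apply, LinearMap.comp_apply, map_sub, hβ, hα, hJ])
  let H : C.X (m + 2) →ₗ[A] T := h.coprod k
  have hH : ∀ x, H (C.d (m + 2) x) = 0 := by
    intro x
    change h (R.d (m + 2) x.1 + ι (m + 2) x.2) + k (-(R'.d (m + 1) x.2)) = 0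
    rw [map_add, hh, hk, map_neg]; simp
  have h4 : ∀ x, H (J (m + 2) x) = h x := by
    intro x
    change h x + k 0 = h x
    simp
  refine ⟨H ∘ₗ β (m + 2), -(H ∘ₗ s (m + 1)), fun x => ?_⟩
  have h2 := congrArg H (hs (m + 1) x)
  rw [map_add, hH, zero_add, LinearMap.sub_apply, map_sub, h4] at h2
  rw [LinearMap.neg_apply, LinearMap.comp_apply, LinearMap.comp_apply, ← h2,
    LinearMap.comp_apply]
  abel

end Cone

end Ungraded

section Graded

variable {F : Type} [Field F] {𝒜 : GradedAlg F}

/-- A grading, given by its projections. -/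
structure Grd (𝒜 : GradedAlg F) (M : Type) [AddCommGroup M] [Module 𝒜.A M] where
  π : ℤ → M →+ M
  fin : ∀ x, {k | π k x ≠ 0}.Finite
  sum : ∀ x, ∑ᶠ k, π k x = x
  same : ∀ k x, π k (π k x) = π k x
  ne : ∀ k l x, k ≠ l → π k (π l x) = 0
  smul : ∀ (i : ℕ) (a : 𝒜.A), a ∈ 𝒜.grading i → ∀ k x, π k (a • x) = a • π (k - i) x

section

variable {M N L : Type} [AddCommGroup M] [Module 𝒜.A M] [AddCommGroup N] [Module 𝒜.A N]
  [AddCommGroup L] [Module 𝒜.A L]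

def IsGr (g : Grd 𝒜 M) (g' : Grd 𝒜 N) (f : M →ₗ[𝒜.A] N) : Prop :=
  ∀ k x, g'.π k (f x) = f (g.π k x)

/-- Everything lives in degrees at least `s`. -/
def Grd.Ge (g : Grd 𝒜 M) (s : ℤ) : Prop := ∀ k, k < s → ∀ x, g.π k x = 0

lemma Grd.ext_of (g : Grd 𝒜 M) {x y : M} (h : ∀ k, g.π k x = g.π k y) : x = y := by
  rw [← g.sum x, ← g.sum y]
  exact finsum_congr h

lemma alg_induction {p : 𝒜.A → Prop} (h0 : p 0) (hom : ∀ i a, a ∈ 𝒜.grading i → p a)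
    (hsum : ∀ a b, p a → p b → p (a + b)) (a : 𝒜.A) : p a :=
  DirectSum.Decomposition.inductionOn 𝒜.grading h0 (fun {i} m => hom i m m.2) hsum a

/-- The degree zero component of a linear map. -/
def degZero (g : Grd 𝒜 M) (g' : Grd 𝒜 N) (f : M →ₗ[𝒜.A] N) : M →ₗ[𝒜.A] N :=
  have fin : ∀ x, (Function.support fun k => g'.π k (f (g.π k x))).Finite := fun x =>
    (g.fin x).subset (fun k hk h => hk (by simp [h]))
  have hadd : ∀ x y, ∑ᶠ k, g'.π k (f (g.π k (x + y))) =
      ∑ᶠ k, g'.π k (f (g.π k x)) + ∑ᶠ k, g'.π k (f (g.π k y)) := fun x y => by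
    rw [← finsum_add_distrib (fin x) (fin y)]
    exact finsum_congr fun k => by simp
  { toFun := fun x => ∑ᶠ k, g'.π k (f (g.π k x))
    map_add' := hadd
    map_smul' := by
      intro a
      induction a using alg_induction with
      | h0 => intro x; simp
      | hom i a ha =>
        intro x
        simp only [RingHom.id_apply]
        have h1 : ∀ k, g'.π k (f (g.π k (a • x))) = a • g'.π (k - i) (f (g.π (k - i) x)) := by
          intro k
          rw [g.smul i a ha, map_smul, g'.smul i a ha]
        rw [finsum_congr h1]
        refine (finsum_comp_equiv (Equiv.subRight (i : ℤ))
          (f := fun k => a • g'.π k (f (g.π k x)))).trans ?_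
        have := (DistribSMul.toAddMonoidHom N a).map_finsum (fin x)
        exact this.symm
      | hsum a b h1 h2 =>
        intro x
        simp only [RingHom.id_apply] at h1 h2 ⊢
        rw [add_smul, hadd, h1, h2, add_smul] }

lemma degZero_apply (g : Grd 𝒜 M) (g' : Grd 𝒜 N) (f : M →ₗ[𝒜.A] N) (x : M) :
    degZero g g' f x = ∑ᶠ k, g'.π k (f (g.π k x)) := rfl

lemma degZero_fin (g : Grd 𝒜 M) (g' : Grd 𝒜 N) (f : M →ₗ[𝒜.A] N) (x : M) :
    (Function.support fun k => g'.π k (f (g.π k x))).Finite :=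
  (g.fin x).subset (fun k hk h => hk (by simp [h]))

lemma degZero_proj (g : Grd 𝒜 M) (g' : Grd 𝒜 N) (f : M →ₗ[𝒜.A] N) (k : ℤ) (x : M) :
    g'.π k (degZero g g' f x) = g'.π k (f (g.π k x)) := by
  rw [degZero_apply, AddMonoidHom.map_finsum _ (degZero_fin g g' f x),
    finsum_eq_single _ k (fun l hl => g'.ne k l _ hl.symm), g'.same]

lemma degZero_isGr (g : Grd 𝒜 M) (g' : Grd 𝒜 N) (f : M →ₗ[𝒜.A] N) :
    IsGr g g' (degZero g g' f) := by
  intro k x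
  rw [degZero_proj, degZero_apply, finsum_eq_single _ k
    (fun l hl => by rw [g.ne l k _ hl]; simp), g.same]

lemma degZero_eq (g : Grd 𝒜 M) (g' : Grd 𝒜 N) (f : M →ₗ[𝒜.A] N) (hf : IsGr g g' f) :
    degZero g g' f = f := by
  ext x
  apply g'.ext_of
  intro k
  rw [degZero_proj, hf k x, hf, g.same]

/-- Restriction of a grading to a stable submodule. -/
def Grd.sub (g : Grd 𝒜 M) (W : Submodule 𝒜.A M) (hW : ∀ k x, x ∈ W → g.π k x ∈ W) :
    Grd 𝒜 W where
  π k := ((g.π k).comp W.subtype.toAddMonoidHom).codRestrict W (fun x => hW k _ x.2)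
  fin x := (g.fin x).subset (fun k hk h => hk (Subtype.ext h))
  sum x := by
    have fin : (Function.support fun k => (⟨g.π k x, hW k _ x.2⟩ : W)).Finite :=
      (g.fin x).subset (fun k hk h => hk (Subtype.ext h))
    apply Subtype.ext
    have := W.subtype.toAddMonoidHom.map_finsum fin
    exact this.trans (g.sum x)
  same k x := Subtype.ext (g.same k _)
  ne k l x h := Subtype.ext (g.ne k l _ h)
  smul i a ha k x := Subtype.ext (g.smul i a ha k _)

lemma Grd.sub_apply (g : Grd 𝒜 M) (W : Submodule 𝒜.A M) (hW : ∀ k x, x ∈ W → g.π k x ∈ W)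
    (k : ℤ) (x : W) : (((g.sub W hW).π k x : W) : M) = g.π k x := rfl

def Grd.shift (g : Grd 𝒜 M) (s : ℤ) : Grd 𝒜 M where
  π k := g.π (k - s)
  fin x := (g.fin x).preimage (f := fun k => k - s) (sub_left_injective.injOn)
  sum x := (finsum_comp_equiv (Equiv.subRight s) (f := fun k => g.π k x)).trans (g.sum x)
  same k x := g.same _ x
  ne k l x h := g.ne _ _ x (by simpa using h)
  smul i a ha k x := by rw [g.smul i a ha, show k - s - i = k - i - s by ring]

/-- Direct sums of gradings. -/
def Grd.finsupp {I : Type} (g : I → Grd 𝒜 M) : Grd 𝒜 (I →₀ M) where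
  π k :=
    { toFun := fun f => Finsupp.onFinset f.support (fun i => (g i).π k (f i))
        (fun i hi => by
          rw [Finsupp.mem_support_iff]
          intro h
          exact hi (by rw [h, map_zero]))
      map_zero' := by ext; simp
      map_add' := fun x y => by ext; simp }
  fin f := by
    refine (f.support.finite_toSet.biUnion (fun i _ => (g i).fin (f i))).subset ?_
    intro k hk
    simp only [Set.mem_iUnion]
    by_contra! hc
    apply hk
    ext i
    simp only [AddMonoidHom.coe_mk, ZeroHom.coe_mk, Finsupp.onFinset_apply, Finsupp.coe_zero,
      Pi.zero_apply]
    by_cases h : i ∈ f.support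
    · by_contra h'
      exact hc i h h'
    · rw [Finsupp.notMem_support_iff.1 h, map_zero]
  sum f := by
    have fin : (Function.support fun k : ℤ => (Finsupp.onFinset f.support (fun i => (g i).π k (f i))
        (fun i hi => by
          rw [Finsupp.mem_support_iff]
          intro h
          exact hi (by rw [h, map_zero])) : I →₀ M)).Finite := by
      refine (f.support.finite_toSet.biUnion (fun i _ => (g i).fin (f i))).subset ?_
      intro k hk
      simp only [Set.mem_iUnion]
      by_contra! hc
      apply hk
      ext i
      simp only [Finsupp.onFinset_apply, Finsupp.coe_zero, Pi.zero_apply]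
      by_cases h : i ∈ f.support
      · by_contra h'
        exact hc i h h'
      · rw [Finsupp.notMem_support_iff.1 h, map_zero]
    ext i
    have := (Finsupp.applyAddHom (M := M) i).map_finsum fin
    exact this.trans ((g i).sum (f i))
  same k f := by ext i; exact (g i).same k _
  ne k l f h := by ext i; exact (g i).ne k l _ h
  smul j a ha k f := by ext i; exact (g i).smul j a ha k _

lemma Grd.finsupp_apply {I : Type} (g : I → Grd 𝒜 M) (k : ℤ) (f : I →₀ M) (i : I) :
    (Grd.finsupp g).π k f i = (g i).π k (f i) := rfl

end

/-- The grading of the algebra. -/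
def algGrd (𝒜 : GradedAlg F) : Grd 𝒜 𝒜.A where
  π k := if 0 ≤ k then GradedRing.proj 𝒜.grading k.toNat else 0
  fin x := by
    classical
    refine ((DirectSum.decompose 𝒜.grading x).support.finite_toSet.image
      (fun n : ℕ => (n : ℤ))).subset ?_
    intro k hk
    rw [Set.mem_ofPred_eq] at hk
    split_ifs at hk with h
    · refine ⟨k.toNat, ?_, by simpa using h⟩
      simp only [Finset.mem_coe, DFinsupp.mem_support_iff]
      intro h'
      apply hk
      rw [GradedRing.proj_apply, h']; rfl
    · simp at hk
  sum x := by
    classical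
    rw [finsum_eq_sum_of_support_subset (s := (DirectSum.decompose 𝒜.grading x).support.map
      Nat.castEmbedding)]
    · rw [Finset.sum_map]
      conv_rhs => rw [← DirectSum.sum_support_decompose 𝒜.grading x]
      refine Finset.sum_congr rfl fun n _ => ?_
      simp [GradedRing.proj_apply]
    · intro k hk
      rw [Function.mem_support] at hk
      split_ifs at hk with h
      · simp only [Finset.coe_map, Set.mem_image, Finset.mem_coe, DFinsupp.mem_support_iff]
        refine ⟨k.toNat, ?_, by simpa using h⟩
        intro h'
        apply hk
        rw [GradedRing.proj_apply, h']; rfl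
      · simp at hk
  same k x := by
    split_ifs with h
    · simp only [GradedRing.proj_apply]
      exact DirectSum.decompose_of_mem_same _ (SetLike.coe_mem _)
    · simp
  ne k l x hkl := by
    split_ifs with h h' h'
    · simp only [GradedRing.proj_apply]
      exact DirectSum.decompose_of_mem_ne _ (SetLike.coe_mem _) (by omega)
    · simp
    · simp
    · simp
  smul i a ha k x := by
    split_ifs with h h' h'
    · simp only [GradedRing.proj_apply, smul_eq_mul]
      rw [DirectSum.coe_decompose_mul_of_left_mem_of_le _ ha (by omega)]
      rw [show k.toNat - i = (k - i).toNat by omega]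
    · simp only [GradedRing.proj_apply, smul_eq_mul]
      rw [DirectSum.coe_decompose_mul_of_left_mem_of_not_le _ ha (by omega)]
      simp
    · omega
    · simp

lemma algGrd_mem (i : ℕ) (a : 𝒜.A) (ha : a ∈ 𝒜.grading i) (k : ℤ) :
    (algGrd 𝒜).π k a = if k = i then a else 0 := by
  change (if 0 ≤ k then GradedRing.proj 𝒜.grading k.toNat else 0 : 𝒜.A →+ 𝒜.A) a = _
  split_ifs with h h' h'
  · subst h'
    simp only [GradedRing.proj_apply]
    exact DirectSum.decompose_of_mem_same _ ha
  · simp only [GradedRing.proj_apply]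
    exact DirectSum.decompose_of_mem_ne _ ha (by omega)
  · omega
  · rfl

lemma algGrd_ge : (algGrd 𝒜).Ge 0 := by
  intro k hk x
  change (if 0 ≤ k then GradedRing.proj 𝒜.grading k.toNat else 0 : 𝒜.A →+ 𝒜.A) x = 0
  rw [if_neg (by omega)]; rfl

lemma Grd.smul_hom {M : Type} [AddCommGroup M] [Module 𝒜.A M] (g : Grd 𝒜 M) (a : 𝒜.A)
    (l k : ℤ) (x : M) (hx : g.π l x = x) :
    g.π k (a • x) = (algGrd 𝒜).π (k - l) a • x := by
  induction a using alg_induction with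
  | h0 => simp
  | hom i a ha =>
    rw [g.smul i a ha, algGrd_mem i a ha]
    split_ifs with h
    · rw [show k - i = l by omega, hx]
    · rw [← hx, g.ne _ _ _ (by omega)]; simp
  | hsum a b h1 h2 =>
    rw [add_smul, map_add, h1, h2, map_add, add_smul]

/-- The grading of a `GMod`. -/
lemma exists_ofGMod (M : 𝒜.GMod) : ∃ g : Grd 𝒜 M.M, ∀ k x, g.π k x = x ↔ x ∈ M.grading k := by
  classical
  have hdec : DirectSum.IsInternal M.grading :=
    DirectSum.isInternal_submodule_of_iSupIndep_of_iSup_eq_top M.indep M.sup_eq_top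
  let _ := hdec.chooseDecomposition
  let π : ℤ → M.M →+ M.M := fun k =>
    { toFun := fun x => (DirectSum.decompose M.grading x k : M.M)
      map_zero' := by simp
      map_add' := by simp }
  have same : ∀ k x, x ∈ M.grading k → π k x = x := fun k x hx =>
    DirectSum.decompose_of_mem_same _ hx
  have ne : ∀ k l x, k ≠ l → x ∈ M.grading l → π k x = 0 := fun k l x h hx =>
    DirectSum.decompose_of_mem_ne _ hx h.symm
  have mem : ∀ k x, π k x ∈ M.grading k := fun k x => SetLike.coe_mem _
  refine ⟨⟨π, ?_, ?_, ?_, ?_, ?_⟩, ?_⟩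
  · intro x
    refine (DirectSum.decompose M.grading x).support.finite_toSet.subset ?_
    intro k hk
    simp only [Finset.mem_coe, DFinsupp.mem_support_iff]
    intro h'
    apply hk
    change (DirectSum.decompose M.grading x k : M.M) = 0
    rw [h']; rfl
  · intro x
    rw [finsum_eq_sum_of_support_subset (s := (DirectSum.decompose M.grading x).support)]
    · exact DirectSum.sum_support_decompose M.grading x
    · intro k hk
      simp only [Finset.mem_coe, DFinsupp.mem_support_iff]
      intro h'
      apply hk
      change (DirectSum.decompose M.grading x k : M.M) = 0
      rw [h']; rfl
  · intro k x
    exact same k _ (mem k x)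
  · intro k l x h
    exact ne k l _ h (mem l x)
  · intro i a ha k x
    refine DirectSum.Decomposition.inductionOn M.grading
      (motive := fun x => π k (a • x) = a • π (k - i) x) ?_ ?_ ?_ x
    · simp
    · intro l m
      have h1 := M.smul_mem ha m.2
      by_cases h : k = i + l
      · subst h
        rw [same _ _ h1, show (i : ℤ) + l - i = l by ring, same _ _ m.2]
      · rw [ne _ _ _ h h1, ne _ _ _ (by omega) m.2, smul_zero]
    · intro x y h1 h2
      rw [smul_add, map_add, h1, h2, map_add, smul_add]
  · intro k x
    exact ⟨fun h => h ▸ mem k x, same k x⟩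

/-- A graded augmented projective resolution. -/
structure GRes (𝒜 : GradedAlg F) extends Res 𝒜.A where
  g : ∀ n, Grd 𝒜 (X n)
  gd : ∀ n, IsGr (g (n + 1)) (g n) (d n)

lemma GRes.glift (R S : GRes 𝒜) (φ : R.X 0 →ₗ[𝒜.A] S.X 0) (hφ : IsGr (R.g 0) (S.g 0) φ) :
    ∃ f : ∀ n, R.X n →ₗ[𝒜.A] S.X n, f 0 = φ ∧
      (∀ n x, S.d n (f (n + 1) x) = f n (R.d n x)) ∧ ∀ n, IsGr (R.g n) (S.g n) (f n) := by
  obtain ⟨f, f0, hf⟩ := R.toRes.lift S.toRes φ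
  refine ⟨fun n => degZero (R.g n) (S.g n) (f n), ?_, ?_, fun n => degZero_isGr _ _ _⟩
  · change degZero (R.g 0) (S.g 0) (f 0) = φ
    rw [f0, degZero_eq _ _ _ hφ]
  · intro n x
    apply (S.g n).ext_of
    intro k
    rw [S.gd, degZero_proj, degZero_proj, ← S.gd, hf, R.gd]

/-- Bundled graded modules in degrees at least `s`. -/
structure GM (𝒜 : GradedAlg F) (s : ℤ) where
  M : ModuleCat.{0} 𝒜.A
  g : Grd 𝒜 M
  ge : g.Ge s

section Cover

variable {s : ℤ} (N : GM 𝒜 s)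

abbrev CovI : Type := {p : ℤ × N.M // s ≤ p.1 ∧ N.g.π p.1 p.2 = p.2}

def cov : GM 𝒜 s where
  M := ModuleCat.of 𝒜.A (CovI N →₀ 𝒜.A)
  g := Grd.finsupp (fun i : CovI N => (algGrd 𝒜).shift i.1.1)
  ge := by
    intro k hk x
    ext i
    exact algGrd_ge _ (by have := i.2.1; omega) _

def covMap : (cov N).M →ₗ[𝒜.A] N.M :=
  Finsupp.linearCombination 𝒜.A (fun i : CovI N => i.1.2)

lemma covMap_surj : Function.Surjective (covMap N) := by
  intro x
  have h : x ∈ LinearMap.range (covMap N) := by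
    rw [← N.g.sum x]
    refine finsum_induction (fun y => y ∈ LinearMap.range (covMap N)) (zero_mem _)
      (fun _ _ => add_mem) ?_
    intro k
    by_cases hk : s ≤ k
    · refine ⟨Finsupp.single (⟨(k, N.g.π k x), hk, N.g.same k x⟩ : CovI N) (1 : 𝒜.A), ?_⟩
      exact (Finsupp.linearCombination_single _ _ _).trans (one_smul _ _)
    · rw [N.ge k (by omega)]
      exact zero_mem _
  exact h

lemma covMap_gr : IsGr (cov N).g N.g (covMap N) := by
  intro k x
  change N.g.π k (Finsupp.linearCombination 𝒜.A (fun i : CovI N => i.1.2) x) =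
    Finsupp.linearCombination 𝒜.A (fun i : CovI N => i.1.2) ((cov N).g.π k x)
  have key : ∀ y : CovI N →₀ 𝒜.A,
      N.g.π k (Finsupp.linearCombination 𝒜.A (fun i : CovI N => i.1.2) y) =
      Finsupp.linearCombination 𝒜.A (fun i : CovI N => i.1.2)
        ((Grd.finsupp (fun i : CovI N => (algGrd 𝒜).shift i.1.1)).π k y) := by
    intro y
    induction y using Finsupp.induction_linear with
    | zero => simp
    | add y z hy hz => rw [map_add, map_add, hy, hz, map_add, map_add]
    | single i a =>
      have : (Grd.finsupp (fun i : CovI N => (algGrd 𝒜).shift i.1.1)).π k (Finsupp.single i a) =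
          Finsupp.single i ((algGrd 𝒜).π (k - i.1.1) a) := by
        classical
        ext j
        rw [Grd.finsupp_apply, Finsupp.single_apply, Finsupp.single_apply]
        split_ifs with h
        · subst h; rfl
        · simp
      rw [this, Finsupp.linearCombination_single, Finsupp.linearCombination_single,
        N.g.smul_hom a i.1.1 k _ i.2.2]
  exact key x

def kerGM : GM 𝒜 s where
  M := ModuleCat.of 𝒜.A (LinearMap.ker (covMap N))
  g := (cov N).g.sub (LinearMap.ker (covMap N)) (by
    intro k x hx
    rw [LinearMap.mem_ker] at hx ⊢
    rw [← covMap_gr, hx, map_zero])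
  ge := by
    intro k hk x
    exact Subtype.ext ((cov N).ge k hk _)

def itGM (N : GM 𝒜 s) : ℕ → GM 𝒜 s
  | 0 => N
  | n + 1 => kerGM (itGM N n)

abbrev freeX : ℕ → ModuleCat.{0} 𝒜.A
  | 0 => N.M
  | n + 1 => (cov (itGM N n)).M

def freeG : ∀ n, Grd 𝒜 (freeX N n)
  | 0 => N.g
  | n + 1 => (cov (itGM N n)).g

def kerInc (N : GM 𝒜 s) : (kerGM N).M →ₗ[𝒜.A] (cov N).M := (LinearMap.ker (covMap N)).subtype

def freeD : ∀ n, freeX N (n + 1) →ₗ[𝒜.A] freeX N n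
  | 0 => covMap N
  | n + 1 => kerInc (itGM N n) ∘ₗ covMap (kerGM (itGM N n))

lemma freeD_ker (n : ℕ) : ∀ x, freeD N n x = 0 ↔ covMap (itGM N n) x = 0 := by
  rcases n with _ | n
  · intro x; rfl
  · intro x
    refine ⟨fun h => ?_, fun h => ?_⟩
    · exact Subtype.ext h
    · change kerInc (itGM N n) (covMap (itGM N (n + 1)) x) = 0
      have h2 := congrArg (kerInc (itGM N n)) h
      exact h2

def freeRes : GRes 𝒜 where
  X := freeX N
  d := freeD N
  surj := covMap_surj N
  dd := by
    intro n x
    rw [freeD_ker]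
    exact (covMap (kerGM (itGM N n)) x).2
  ex := by
    intro n x hx
    rw [freeD_ker] at hx
    obtain ⟨y, hy⟩ := covMap_surj (kerGM (itGM N n)) ⟨x, hx⟩
    refine ⟨y, ?_⟩
    exact congrArg (kerInc (itGM N n)) hy
  proj := by
    intro n
    change Module.Projective 𝒜.A (CovI (itGM N n) →₀ 𝒜.A)
    infer_instance
  g := freeG N
  gd := by
    rintro (_ | n)
    · exact covMap_gr N
    · intro k x
      have h := covMap_gr (kerGM (itGM N n)) k x
      exact congrArg (kerInc (itGM N n)) h

lemma freeRes_ge (n : ℕ) : ((freeRes N).g n).Ge s := by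
  rcases n with _ | n
  · exact N.ge
  · exact (cov (itGM N n)).ge

end Cover

/-- Shifted direct sum of copies of a graded resolution. -/
def GRes.sumShift (E : GRes 𝒜) (I : Type) (s : ℤ) : GRes 𝒜 where
  X n := ModuleCat.of 𝒜.A (I →₀ E.X n)
  d n := Finsupp.mapRange.linearMap (E.d n)
  surj := by
    intro y
    have h := Finsupp.mapRange_surjective (α := I) (E.d 0) (map_zero _) E.surj
    exact h y
  dd n x := by
    ext i
    exact E.dd n (x i)
  ex n x hx := by
    classical
    have hx' : ∀ i, E.d n (x i) = 0 := fun i => DFunLike.congr_fun hx i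
    choose y hy using fun i => E.ex n (x i) (hx' i)
    refine ⟨Finsupp.onFinset x.support (fun i => if x i = 0 then 0 else y i) ?_, ?_⟩
    · intro i hi
      rw [Finsupp.mem_support_iff]
      intro h
      simp [h] at hi
    · ext i
      change E.d (n + 1) (if x i = 0 then 0 else y i) = x i
      split_ifs with h
      · rw [h, map_zero]
      · exact hy i
  proj n := by
    classical
    have := E.proj n
    exact Module.Projective.of_equiv' (finsuppLequivDFinsupp 𝒜.A (ι := I) (M := E.X (n + 1))).symm
  g n := Grd.finsupp (fun _ => (E.g n).shift s)
  gd n := by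
    intro k x
    ext i
    exact E.gd n _ _

/-- The part of degree `t` of a map to a module killed by positive degrees. -/
lemma exists_degPart {M T : Type} [AddCommGroup M] [Module 𝒜.A M] [AddCommGroup T] [Module 𝒜.A T]
    (hTJ : ∀ i : ℕ, 0 < i → ∀ a ∈ 𝒜.grading i, ∀ x : T, a • x = 0)
    (g : Grd 𝒜 M) (κ : M →ₗ[𝒜.A] T) (t : ℤ) :
    ∃ κ' : M →ₗ[𝒜.A] T, ∀ x, κ' x = κ (g.π t x) := by
  refine ⟨{ toFun := fun x => κ (g.π t x), map_add' := by simp, map_smul' := ?_ }, fun x => rfl⟩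
  intro a
  induction a using alg_induction with
  | h0 => simp
  | hom i a ha =>
    intro x
    rw [g.smul i a ha, map_smul]
    rcases Nat.eq_zero_or_pos i with rfl | hi
    · simp
    · rw [hTJ i hi a ha, RingHom.id_apply, hTJ i hi a ha]
  | hsum a b h1 h2 =>
    intro x
    simp only [RingHom.id_apply] at h1 h2 ⊢
    rw [add_smul, map_add, map_add, h1, h2, add_smul]

/-- Degree `t` cocycles are coboundaries. -/
def Van (G : GRes 𝒜) (T : ModuleCat.{0} 𝒜.A) (m : ℕ) (t : ℤ) : Prop :=
  ∀ h : G.X (m + 2) →ₗ[𝒜.A] T, (∀ x, h (G.d (m + 2) x) = 0) →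
    (∀ x, h x = h ((G.g (m + 2)).π t x)) →
    ∃ k : G.X (m + 1) →ₗ[𝒜.A] T, ∀ x, h x = k (G.d (m + 1) x)

/-- Data on a graded resolution of the trivial module. -/
structure TData (E : GRes 𝒜) : Prop where
  conc : ∀ k, k ≠ 0 → ∀ x, (E.g 0).π k x = 0
  killed : ∀ i : ℕ, 0 < i → ∀ a ∈ 𝒜.grading i, ∀ x : E.X 0, a • x = 0
  ss : IsSemisimpleModule 𝒜.A (E.X 0)
  cover : ∀ (S : Type) [AddCommGroup S] [Module 𝒜.A S],
    (∀ i : ℕ, 0 < i → ∀ a ∈ 𝒜.grading i, ∀ x : S, a • x = 0) →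
    ∀ y : S, ∃ (f : E.X 0 →ₗ[𝒜.A] S) (τ : E.X 0), f τ = y

lemma TData.zero {E : GRes 𝒜} (hE : TData E) (x : E.X 0) : (E.g 0).π 0 x = x := by
  conv_rhs => rw [← (E.g 0).sum x]
  rw [finsum_eq_single _ 0 (fun k hk => hE.conc k hk x)]

def topW {M : Type} [AddCommGroup M] [Module 𝒜.A M] (g : Grd 𝒜 M) (s : ℤ) (hg : g.Ge s) :
    Submodule 𝒜.A M where
  carrier := {x | g.π s x = 0}
  zero_mem' := map_zero _
  add_mem' := fun {x y} hx hy => by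
    change g.π s (x + y) = 0
    rw [map_add, show g.π s x = 0 from hx, show g.π s y = 0 from hy, add_zero]
  smul_mem' := by
    intro a x hx
    change g.π s x = 0 at hx
    change g.π s (a • x) = 0
    induction a using alg_induction with
    | h0 => simp
    | hom i a ha =>
      rw [g.smul i a ha]
      rcases Nat.eq_zero_or_pos i with rfl | hi
      · simp [hx]
      · rw [hg _ (by omega), smul_zero]
    | hsum a b h1 h2 => rw [add_smul, map_add, h1, h2, add_zero]

lemma mem_topW {M : Type} [AddCommGroup M] [Module 𝒜.A M] (g : Grd 𝒜 M) (s : ℤ) (hg : g.Ge s)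
    (x : M) : x ∈ topW g s hg ↔ g.π s x = 0 := Iff.rfl

lemma topW_killed {M : Type} [AddCommGroup M] [Module 𝒜.A M] (g : Grd 𝒜 M) (s : ℤ)
    (hg : g.Ge s) : ∀ i : ℕ, 0 < i → ∀ a ∈ 𝒜.grading i, ∀ x : M ⧸ topW g s hg, a • x = 0 := by
  intro i hi a ha x
  obtain ⟨x, rfl⟩ := (topW g s hg).mkQ_surjective x
  rw [← map_smul, Submodule.mkQ_apply, Submodule.Quotient.mk_eq_zero, mem_topW, g.smul i a ha,
    hg _ (by omega), smul_zero]

lemma step (E : GRes 𝒜) (hE : TData E) (U V : GRes 𝒜) (s : ℤ) (hU : (U.g 0).Ge s)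
    (ι0 : V.X 0 →ₗ[𝒜.A] U.X 0) (inj : Function.Injective ι0) (hι0 : IsGr (V.g 0) (U.g 0) ι0)
    (hr : ∀ x, (U.g 0).π s x = 0 ↔ ∃ y, ι0 y = x) (m : ℕ) (t : ℤ) (hV : Van V (E.X 0) m t)
    (h : U.X (m + 2) →ₗ[𝒜.A] E.X 0) (hh : ∀ x, h (U.d (m + 2) x) = 0)
    (ht : ∀ x, h x = h ((U.g (m + 2)).π t x)) :
    ∃ (I : Type) (α : ∀ n, U.X n →ₗ[𝒜.A] (I →₀ E.X n)),
      (∀ n x i, E.d n (α (n + 1) x i) = α n (U.d n x) i) ∧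
      (∀ n k x i, (E.g n).π (k - s) (α n x i) = α n ((U.g n).π k x) i) ∧
      ∃ (φ : (I →₀ E.X (m + 2)) →ₗ[𝒜.A] E.X 0) (κ : U.X (m + 1) →ₗ[𝒜.A] E.X 0),
        ∀ x, h x = φ (α (m + 2) x) + κ (U.d (m + 1) x) := by
  classical
  let W := topW (U.g 0) s hU
  let S := U.X 0 ⧸ W
  choose c τ hc using hE.cover S (topW_killed (U.g 0) s hU)
  let r : (S →₀ E.X 0) →ₗ[𝒜.A] S := Finsupp.lsum ℕ c
  have hrs : Function.Surjective r := fun y => ⟨Finsupp.single y (τ y), by simp [r, hc]⟩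
  have := hE.ss
  obtain ⟨σ, hσ⟩ := IsSemisimpleModule.lifting_property r hrs LinearMap.id
  let Y := E.sumShift S s
  let α0 : U.X 0 →ₗ[𝒜.A] (S →₀ E.X 0) := σ ∘ₗ W.mkQ
  have hα0W : ∀ x, (U.g 0).π s x = 0 → α0 x = 0 := by
    intro x hx
    have : W.mkQ x = 0 := by
      rw [Submodule.mkQ_apply, Submodule.Quotient.mk_eq_zero]
      exact hx
    change σ (W.mkQ x) = 0
    rw [this, map_zero]
  have hα0g : IsGr (U.g 0) (Y.g 0) α0 := by
    intro k x
    refine Finsupp.ext (α := S) (M := E.X 0) fun i => ?_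
    change (E.g 0).π (k - s) (α0 x i) = α0 ((U.g 0).π k x) i
    by_cases hk : k = s
    · subst hk
      rw [sub_self, hE.zero]
      have := hα0W (x - (U.g 0).π k x) (by rw [map_sub, (U.g 0).same, sub_self])
      rw [map_sub, sub_eq_zero] at this
      rw [← this]
    · rw [hE.conc _ (by omega), hα0W _ ((U.g 0).ne s k x (Ne.symm hk))]
      rfl
  obtain ⟨α, hα00, hα, hαg⟩ := U.glift Y α0 hα0g
  obtain ⟨ι, hι00, hι, hιg⟩ := V.glift U ι0 hι0
  obtain ⟨k, hk⟩ := hV (h ∘ₗ ι (m + 2))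
    (fun x => by rw [LinearMap.comp_apply, ← hι, hh])
    (fun x => by rw [LinearMap.comp_apply, LinearMap.comp_apply, ← hιg, ← ht])
  obtain ⟨φ, κ, hφ⟩ := cone_key U.toRes V.toRes ι S W.mkQ hι (by rw [hι00]; exact inj)
    W.mkQ_surjective
    (by
      intro x
      rw [hι00, ← hr, Submodule.mkQ_apply, Submodule.Quotient.mk_eq_zero]
      exact Iff.rfl)
    Y.toRes r α hα
    (by
      intro x
      rw [hα00]
      exact LinearMap.congr_fun hσ (W.mkQ x))
    m h hh k hk
  refine ⟨S, α, ?_, ?_, φ, κ, hφ⟩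
  · intro n x i
    exact congrArg (fun f : S →₀ E.X n => f i) (hα n x)
  · intro n k x i
    exact congrArg (fun f : S →₀ E.X n => f i) (hαg n k x)

lemma van (E : GRes 𝒜) (hE : TData E) (m : ℕ) (t δ : ℤ) (hδ : (E.g (m + 2)).Ge δ) (N : ℕ) :
    ∀ s : ℤ, t + 1 ≤ s + N → t < s + δ → ∀ M : GM 𝒜 s, Van (freeRes M) (E.X 0) m t := by
  induction N with
  | zero =>
    intro s hs _ M h _ ht
    refine ⟨0, fun x => ?_⟩
    rw [ht, freeRes_ge M _ t (by push_cast at hs; omega), map_zero]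
    rfl
  | succ N ih =>
    intro s hs hsd M h hh ht
    let W := topW M.g s M.ge
    let M' : GM 𝒜 (s + 1) :=
      { M := ModuleCat.of 𝒜.A W
        g := M.g.sub W (by
          intro k x hx
          rw [mem_topW] at hx ⊢
          by_cases hk : s = k
          · subst hk; rw [M.g.same, hx]
          · exact M.g.ne _ _ _ hk)
        ge := by
          intro k hk x
          apply Subtype.ext
          rw [Grd.sub_apply]
          rcases lt_or_eq_of_le (show k ≤ s by omega) with h | rfl
          · exact M.ge k h _
          · exact x.2 }
    obtain ⟨I, α, hα, hαg, φ, κ, hφ⟩ := step E hE (freeRes M) (freeRes M') s M.ge W.subtype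
      W.injective_subtype (fun k x => rfl)
      (fun x => ⟨fun hx => ⟨⟨x, hx⟩, rfl⟩, fun ⟨y, hy⟩ => hy ▸ y.2⟩) m t
      (ih (s + 1) (by push_cast at hs; omega) (by omega) M') h hh ht
    obtain ⟨κ', hκ'⟩ := exists_degPart hE.killed ((freeRes M).g (m + 1)) κ t
    refine ⟨κ', fun x => ?_⟩
    rw [ht, hφ, hκ', (freeRes M).gd]
    have h0 : α (m + 2) (((freeRes M).g (m + 2)).π t x) = 0 := by
      ext i
      rw [← hαg, hδ _ (by omega)]
      rfl
    rw [h0, map_zero, zero_add]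

/-- The final factorisation statement. -/
lemma final (E : GRes 𝒜) (hE : TData E) (m : ℕ) (t δ s : ℤ) (hδ : (E.g (m + 2)).Ge δ)
    (hts : t = s + δ) (U : GRes 𝒜) (hU : (U.g 0).Ge s)
    (h : U.X (m + 2) →ₗ[𝒜.A] E.X 0) (hh : ∀ x, h (U.d (m + 2) x) = 0)
    (ht : ∀ x, h x = h ((U.g (m + 2)).π t x)) :
    ∃ (I : Type) (α : ∀ n, U.X n →ₗ[𝒜.A] (I →₀ E.X n)),
      (∀ n x i, E.d n (α (n + 1) x i) = α n (U.d n x) i) ∧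
      ∃ (φ : (I →₀ E.X (m + 2)) →ₗ[𝒜.A] E.X 0) (κ : U.X (m + 1) →ₗ[𝒜.A] E.X 0),
        ∀ x, h x = φ (α (m + 2) x) + κ (U.d (m + 1) x) := by
  let W := topW (U.g 0) s hU
  let M' : GM 𝒜 (s + 1) :=
    { M := ModuleCat.of 𝒜.A W
      g := (U.g 0).sub W (by
        intro k x hx
        rw [mem_topW] at hx ⊢
        by_cases hk : s = k
        · subst hk; rw [(U.g 0).same, hx]
        · exact (U.g 0).ne _ _ _ hk)
      ge := by
        intro k hk x
        apply Subtype.ext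
        rw [Grd.sub_apply]
        rcases lt_or_eq_of_le (show k ≤ s by omega) with h | rfl
        · exact hU k h _
        · exact x.2 }
  obtain ⟨I, α, hα, _, H⟩ := step E hE U (freeRes M') s hU W.subtype
    W.injective_subtype (fun k x => rfl)
    (fun x => ⟨fun hx => ⟨⟨x, hx⟩, rfl⟩, fun ⟨y, hy⟩ => hy ▸ y.2⟩) m t
    (van E hE m t δ hδ (t + 1 - (s + 1)).toNat (s + 1) (by omega) (by omega) M') h hh ht
  exact ⟨I, α, hα, H⟩

end Graded

section Assemble

open GradedAlg

variable {F : Type} [Field F] {𝒜 : GradedAlg F}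

lemma ghom_isGr {M N : 𝒜.GMod} (f : GHom M N) (gM : Grd 𝒜 M.M) (gN : Grd 𝒜 N.M)
    (hM : ∀ k x, gM.π k x = x ↔ x ∈ M.grading k) (hN : ∀ k x, gN.π k x = x ↔ x ∈ N.grading k) :
    IsGr gM gN f.lin := by
  intro k x
  have key : ∀ l, gN.π l (f.lin (gM.π l x)) = f.lin (gM.π l x) := fun l =>
    (hN _ _).2 (f.grad l _ ((hM _ _).1 (gM.same l x)))
  have h1 : f.lin x = ∑ᶠ l, f.lin (gM.π l x) := by
    conv_lhs => rw [← gM.sum x]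
    exact f.lin.toAddMonoidHom.map_finsum (gM.fin x)
  rw [h1, AddMonoidHom.map_finsum, finsum_eq_single _ k, key]
  · intro l hl
    rw [← key, gN.ne _ _ _ hl.symm]
  · refine (gM.fin x).subset fun l hl h => hl ?_
    change f.lin (gM.π l x) = 0
    rw [h, map_zero]

lemma gen_ge {M : 𝒜.GMod} (g : Grd 𝒜 M.M) (hM : ∀ k x, g.π k x = x ↔ x ∈ M.grading k)
    (s : ℤ) (hs : M.GenInDeg s) : g.Ge s := by
  intro k hk x
  have hx : x ∈ Submodule.span 𝒜.A (M.grading s : Set M.M) := by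
    rw [show Submodule.span 𝒜.A (M.grading s : Set M.M) = ⊤ from hs]
    trivial
  induction hx using Submodule.span_induction generalizing k with
  | mem x hx => rw [← (hM s x).2 hx, g.ne _ _ _ hk.ne]
  | zero => exact map_zero _
  | add x y _ _ h1 h2 => rw [map_add, h1 k hk, h2 k hk, add_zero]
  | smul a x _ h1 =>
    induction a using alg_induction with
    | h0 => simp
    | hom i a ha => rw [g.smul i a ha, h1 _ (by omega), smul_zero]
    | hsum a b h1 h2 => rw [add_smul, map_add, h1, h2, add_zero]

lemma gen_deg {M : 𝒜.GMod} (g : Grd 𝒜 M.M) (hM : ∀ k x, g.π k x = x ↔ x ∈ M.grading k)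
    (s : ℤ) (hs : M.GenInDeg s) {T : Type} [AddCommGroup T] [Module 𝒜.A T]
    (hTJ : ∀ i : ℕ, 0 < i → ∀ a ∈ 𝒜.grading i, ∀ x : T, a • x = 0) (h : M.M →ₗ[𝒜.A] T) (x : M.M) :
    h x = h (g.π s x) := by
  obtain ⟨κ, hκ⟩ := exists_degPart hTJ g h s
  rw [← hκ]
  have : h = κ := LinearMap.ext_on hs (fun y hy => by rw [hκ, (hM s y).2 hy])
  rw [← this]

lemma mem_jideal (a : 𝒜.A) : a ∈ 𝒜.jideal ↔ GradedRing.projZeroRingHom 𝒜.grading a = 0 := by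
  exact HomogeneousIdeal.mem_irrelevant_iff 𝒜.grading a

lemma jideal_of_pos (i : ℕ) (hi : 0 < i) (a : 𝒜.A) (ha : a ∈ 𝒜.grading i) : a ∈ 𝒜.jideal :=
  HomogeneousIdeal.mem_irrelevant_of_mem 𝒜.grading hi ha

lemma quot_killed (a : 𝒜.A) (ha : a ∈ 𝒜.jideal) (x : 𝒜.A ⧸ 𝒜.jideal) : a • x = 0 := by
  obtain ⟨b, rfl⟩ := Submodule.mkQ_surjective _ x
  rw [← map_smul, Submodule.mkQ_apply, Submodule.Quotient.mk_eq_zero, smul_eq_mul, mem_jideal,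
    map_mul, (mem_jideal a).1 ha, zero_mul]

lemma T_killed {T : 𝒜.GMod} (hT : IsTrivialGMod T) (a : 𝒜.A) (ha : a ∈ 𝒜.jideal) (x : T.M) :
    a • x = 0 := by
  obtain ⟨e⟩ := hT.2
  apply e.injective
  rw [map_smul, quot_killed a ha, map_zero]

lemma killed_jideal {S : Type} [AddCommGroup S] [Module 𝒜.A S]
    (hS : ∀ i : ℕ, 0 < i → ∀ a ∈ 𝒜.grading i, ∀ x : S, a • x = 0)
    (a : 𝒜.A) (ha : a ∈ 𝒜.jideal) (x : S) : a • x = 0 := by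
  classical
  rw [← DirectSum.sum_support_decompose 𝒜.grading a, Finset.sum_smul]
  refine Finset.sum_eq_zero fun i _ => ?_
  rcases Nat.eq_zero_or_pos i with rfl | hi
  · have : ((DirectSum.decompose 𝒜.grading a 0 : 𝒜.grading 0) : 𝒜.A) = 0 := (mem_jideal a).1 ha
    rw [this, zero_smul]
  · exact hS i hi _ (SetLike.coe_mem _) x

lemma T_ss (hA : 𝒜.Standing) : IsSemisimpleModule 𝒜.A (𝒜.A ⧸ 𝒜.jideal) := by
  have := hA.semisimple
  have hs : RingHomSurjective (GradedRing.projZeroRingHom' 𝒜.grading) :=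
    ⟨GradedRing.projZeroRingHom'_surjective 𝒜.grading⟩
  let φ : 𝒜.A →ₛₗ[GradedRing.projZeroRingHom' 𝒜.grading] 𝒜.grading 0 :=
    { toFun := GradedRing.projZeroRingHom' 𝒜.grading
      map_add' := map_add _
      map_smul' := fun a b => by rw [smul_eq_mul, map_mul, smul_eq_mul] }
  have hk : ∀ a, a ∈ 𝒜.jideal ↔ φ a = 0 := by
    intro a
    rw [mem_jideal]
    exact (Subtype.ext_iff (a1 := GradedRing.projZeroRingHom' 𝒜.grading a) (a2 := 0)).symm
  let ψ := Submodule.liftQ 𝒜.jideal φ (fun a ha => (hk a).1 ha)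
  have hψ : Function.Bijective ψ := by
    constructor
    · rw [← LinearMap.ker_eq_bot, eq_bot_iff]
      intro x hx
      obtain ⟨a, rfl⟩ := Submodule.mkQ_surjective _ x
      have : φ a = 0 := hx
      rw [Submodule.mem_bot, Submodule.mkQ_apply, Submodule.Quotient.mk_eq_zero, hk, this]
    · intro y
      obtain ⟨a, ha⟩ := GradedRing.projZeroRingHom'_surjective 𝒜.grading y
      exact ⟨Submodule.Quotient.mk a, ha⟩
  exact (LinearMap.isSemisimpleModule_iff_of_bijective ψ hψ).2 inferInstance

lemma T_cover {T : 𝒜.GMod} (hT : IsTrivialGMod T) (S : Type) [AddCommGroup S] [Module 𝒜.A S]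
    (hS : ∀ i : ℕ, 0 < i → ∀ a ∈ 𝒜.grading i, ∀ x : S, a • x = 0) (y : S) :
    ∃ (f : T.M →ₗ[𝒜.A] S) (τ : T.M), f τ = y := by
  obtain ⟨e⟩ := hT.2
  refine ⟨(Submodule.liftQ 𝒜.jideal (LinearMap.toSpanSingleton 𝒜.A S y) ?_) ∘ₗ e.toLinearMap,
    e.symm (Submodule.Quotient.mk 1), ?_⟩
  · intro a ha
    exact killed_jideal hS a ha y
  · rw [LinearMap.comp_apply, LinearEquiv.coe_coe, LinearEquiv.apply_symm_apply]
    change (1 : 𝒜.A) • y = y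
    rw [one_smul]

variable {T : 𝒜.GMod} (R : MinRes T)

/-- All cochains vanish on boundaries. -/
lemma cochain_d (hT : IsTrivialGMod T) (n : ℕ) (f : (R.P n).M →ₗ[𝒜.A] T.M) (x : (R.P (n + 1)).M) :
    f ((R.d n).lin x) = 0 := by
  have h1 := R.minimal n ⟨x, rfl⟩
  refine Submodule.smul_induction_on h1 ?_ ?_
  · intro a ha y _
    rw [map_smul, T_killed hT a ha]
  · intro y z h1 h2
    rw [map_add, h1, h2, add_zero]

lemma all_cocyc (hT : IsTrivialGMod T) (n : ℕ) (f : HomSp T R n) : f ∈ cocyc T R n :=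
  LinearMap.ext fun x => cochain_d R hT n f x

lemma exists_gr : ∃ g : ∀ n, Grd 𝒜 (R.P n).M, ∀ n k x, (g n).π k x = x ↔ x ∈ (R.P n).grading k := by
  choose g hg using fun n => exists_ofGMod (R.P n)
  exact ⟨g, hg⟩

/-- The augmented resolution. -/
def EX : ℕ → ModuleCat.{0} 𝒜.A
  | 0 => ModuleCat.of 𝒜.A T.M
  | n + 1 => ModuleCat.of 𝒜.A (R.P n).M

def Ed : ∀ n, EX R (n + 1) →ₗ[𝒜.A] EX R n
  | 0 => R.aug.lin
  | n + 1 => (R.d n).lin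

def Eg (gT : Grd 𝒜 T.M) (g : ∀ n, Grd 𝒜 (R.P n).M) : ∀ n, Grd 𝒜 (EX R n)
  | 0 => gT
  | n + 1 => g n

lemma R_dd (n : ℕ) (x) : (R.d n).lin ((R.d (n + 1)).lin x) = 0 := by
  have : (R.d (n + 1)).lin x ∈ LinearMap.ker (R.d n).lin := R.exact n ▸ ⟨x, rfl⟩
  exact this

lemma R_ex (n : ℕ) (x) (hx : (R.d n).lin x = 0) : ∃ y, (R.d (n + 1)).lin y = x := by
  have : x ∈ LinearMap.range (R.d (n + 1)).lin := R.exact n ▸ hx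
  exact this

lemma R_dd0 (x) : R.aug.lin ((R.d 0).lin x) = 0 := by
  have : (R.d 0).lin x ∈ LinearMap.ker R.aug.lin := R.exact_aug ▸ ⟨x, rfl⟩
  exact this

lemma R_ex0 (x) (hx : R.aug.lin x = 0) : ∃ y, (R.d 0).lin y = x := by
  have : x ∈ LinearMap.range (R.d 0).lin := R.exact_aug ▸ hx
  exact this

def mkE (gT : Grd 𝒜 T.M) (hgT : ∀ k x, gT.π k x = x ↔ x ∈ T.grading k)
    (g : ∀ n, Grd 𝒜 (R.P n).M) (hg : ∀ n k x, (g n).π k x = x ↔ x ∈ (R.P n).grading k) :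
    GRes 𝒜 where
  X := EX R
  d := Ed R
  surj := R.aug_surj
  dd n := match n with
    | 0 => R_dd0 R
    | n + 1 => R_dd R n
  ex n := match n with
    | 0 => R_ex0 R
    | n + 1 => R_ex R n
  proj n := R.projective n
  g := Eg R gT g
  gd n := match n with
    | 0 => ghom_isGr R.aug (g 0) gT (hg 0) hgT
    | n + 1 => ghom_isGr (R.d n) (g (n + 1)) (g n) (hg (n + 1)) (hg n)

lemma tdata (hA : 𝒜.Standing) (hT : IsTrivialGMod T)
    (gT : Grd 𝒜 T.M) (hgT : ∀ k x, gT.π k x = x ↔ x ∈ T.grading k)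
    (g : ∀ n, Grd 𝒜 (R.P n).M) (hg : ∀ n k x, (g n).π k x = x ↔ x ∈ (R.P n).grading k) :
    TData (mkE R gT hgT g hg) where
  conc k hk x := by
    have := (hgT k _).1 (gT.same k x)
    rw [hT.1 k hk] at this
    exact this
  killed i hi a ha x := T_killed hT a (jideal_of_pos i hi a ha) x
  ss := by
    obtain ⟨e⟩ := hT.2
    have := T_ss hA
    exact IsSemisimpleModule.congr e
  cover S _ _ hS y := T_cover hT S hS y

/-- Truncation of a graded resolution. -/
def truncX (E : GRes 𝒜) (j : ℕ) : ℕ → ModuleCat.{0} 𝒜.A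
  | 0 => ModuleCat.of 𝒜.A (LinearMap.range (E.d j))
  | n + 1 => E.X (j + n + 1)

def truncD (E : GRes 𝒜) (j : ℕ) : ∀ n, truncX E j (n + 1) →ₗ[𝒜.A] truncX E j n
  | 0 => (E.d j).rangeRestrict
  | n + 1 => E.d (j + n + 1)

def truncG (E : GRes 𝒜) (j : ℕ) : ∀ n, Grd 𝒜 (truncX E j n)
  | 0 => (E.g j).sub (LinearMap.range (E.d j)) (by
      rintro k _ ⟨y, rfl⟩
      exact ⟨(E.g (j + 1)).π k y, (E.gd j k y).symm⟩)
  | n + 1 => E.g (j + n + 1)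

def trunc (E : GRes 𝒜) (j : ℕ) : GRes 𝒜 where
  X := truncX E j
  d := truncD E j
  surj := (E.d j).surjective_rangeRestrict
  dd n := match n with
    | 0 => fun x => Subtype.ext (E.dd j x)
    | n + 1 => fun x => E.dd (j + n + 1) x
  ex n := match n with
    | 0 => fun x hx => E.ex j x (congrArg Subtype.val hx)
    | n + 1 => fun x hx => E.ex (j + n + 1) x hx
  proj n := E.proj (j + n)
  g := truncG E j
  gd n := match n with
    | 0 => fun k x => Subtype.ext (E.gd j k x)
    | n + 1 => fun k x => E.gd (j + n + 1) k x

lemma trunc_ge (E : GRes 𝒜) (j : ℕ) (s : ℤ) (hs : (E.g (j + 1)).Ge s) :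
    ((trunc E j).g 0).Ge s := by
  rintro k hk ⟨_, y, rfl⟩
  apply Subtype.ext
  change (E.g j).π k (E.d j y) = 0
  rw [E.gd, hs k hk, map_zero]

/-- Chain maps `P_{j+*} → P_*`. -/
structure TL (j : ℕ) where
  ℓ : ∀ k, (R.P (j + k)).M →ₗ[𝒜.A] (R.P k).M
  comm : ∀ k x, (R.d k).lin (ℓ (k + 1) x) = ℓ k ((R.d (j + k)).lin x)

def castP {m n : ℕ} (h : m = n) : (R.P m).M →ₗ[𝒜.A] (R.P n).M := h ▸ LinearMap.id

lemma castP_self {m : ℕ} (h : m = m) (x) : castP R h x = x := rfl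

lemma castP_castP {m n : ℕ} (h : m = n) (h' : n = m) (x) : castP R h (castP R h' x) = x := by
  subst h; rfl

lemma castP_d {m n : ℕ} (h : m = n) (h' : m + 1 = n + 1) (x) :
    (R.d n).lin (castP R h' x) = castP R h ((R.d m).lin x) := by
  subst h; rfl

def TL.toLift {R : MinRes T} {j : ℕ} (L : TL R j) : ChainLift T R R j (R.aug.lin ∘ₗ L.ℓ 0) where
  ℓ m k h := L.ℓ k ∘ₗ castP R (h.trans (Nat.add_comm k j))
  comm_aug := by
    ext x
    rfl
  comm k := by
    ext x
    simp only [LinearMap.comp_apply]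
    rw [L.comm]
    exact congrArg (L.ℓ k) (castP_d R (Nat.add_comm k j) _ x)

/-- Factorisation through chain maps. -/
def Fac (i j : ℕ) : Prop :=
  ∀ h : (R.P (j + i)).M →ₗ[𝒜.A] T.M, ∃ (I : Type) (s : Finset I) (L : I → TL R j)
    (f : I → (R.P i).M →ₗ[𝒜.A] T.M), ∀ x, h x = ∑ k ∈ s, f k ((L k).ℓ i x)

lemma fac_zero (hT : IsTrivialGMod T) (j : ℕ) (gT : Grd 𝒜 T.M)
    (hgT : ∀ k x, gT.π k x = x ↔ x ∈ T.grading k)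
    (g : ∀ n, Grd 𝒜 (R.P n).M) (hg : ∀ n k x, (g n).π k x = x ↔ x ∈ (R.P n).grading k) :
    Fac R 0 j := by
  intro h
  let E := mkE R gT hgT g hg
  let h' : E.X (j + 1) →ₗ[𝒜.A] E.X 0 := h
  have hk : ∀ x, E.d j x = 0 → h' x = 0 := by
    intro x hx
    obtain ⟨y, hy⟩ := E.ex j x hx
    rw [← hy]
    exact cochain_d R hT j h y
  have hker : LinearMap.ker (E.d j) ≤ LinearMap.ker h' := fun x hx => hk x hx
  let φ : LinearMap.range (E.d j) →ₗ[𝒜.A] E.X 0 :=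
    (Submodule.liftQ _ h' hker) ∘ₗ (E.d j).quotKerEquivRange.symm.toLinearMap
  have hφ : ∀ x, φ ((E.d j).rangeRestrict x) = h' x := by
    intro x
    have : (E.d j).quotKerEquivRange.symm ((E.d j).rangeRestrict x) = Submodule.Quotient.mk x := by
      rw [LinearEquiv.symm_apply_eq]
      rfl
    change (Submodule.liftQ _ h' hker)
      ((E.d j).quotKerEquivRange.symm ((E.d j).rangeRestrict x)) = h' x
    rw [this]
    rfl
  obtain ⟨f, hf0, hf⟩ := (trunc E j).toRes.lift E.toRes φ
  refine ⟨Unit, Finset.univ, fun _ => ⟨fun k => f (k + 1), fun k x => hf (k + 1) x⟩,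
    fun _ => R.aug.lin, fun x => ?_⟩
  rw [Finset.sum_const, Finset.card_univ, Fintype.card_unit, one_smul]
  have h1 := hf 0 x
  rw [hf0] at h1
  exact (h1.trans (hφ x)).symm

lemma fac_succ (hA : 𝒜.Standing) (hT : IsTrivialGMod T) (m j : ℕ) (gT : Grd 𝒜 T.M)
    (hgT : ∀ k x, gT.π k x = x ↔ x ∈ T.grading k)
    (g : ∀ n, Grd 𝒜 (R.P n).M) (hg : ∀ n k x, (g n).π k x = x ↔ x ∈ (R.P n).grading k)
    (t δ s : ℤ) (hts : t = s + δ) (hδ : (R.P (m + 1)).GenInDeg δ) (hs : (R.P j).GenInDeg s)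
    (ht : (R.P (j + (m + 1))).GenInDeg t) :
    Fac R (m + 1) j := by
  classical
  intro h
  let E := mkE R gT hgT g hg
  have hE : TData E := tdata R hA hT gT hgT g hg
  obtain ⟨I, α, hα, φ, κ, hφ⟩ := final E hE m t δ s (gen_ge (g (m + 1)) (hg (m + 1)) δ hδ) hts
    (trunc E j) (trunc_ge E j s (gen_ge (g j) (hg j) s hs)) h
    (fun x => cochain_d R hT (j + (m + 1)) h x)
    (fun x => gen_deg (g (j + (m + 1))) (hg (j + (m + 1))) t ht hE.killed h x)
  let a : (R.P (j + (m + 1))).M →ₗ[𝒜.A] (I →₀ (R.P (m + 1)).M) := α (m + 2)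
  let φ' : (I →₀ (R.P (m + 1)).M) →ₗ[𝒜.A] T.M := φ
  have hh : ∀ x, h x = φ' (a x) := by
    intro x
    refine (hφ x).trans ?_
    have : κ ((trunc E j).d (m + 1) x) = 0 := cochain_d R hT (j + m) κ x
    rw [this, add_zero]
    rfl
  have hfin : ∃ s : Finset I, ∀ x, (a x).support ⊆ s := by
    obtain ⟨S, hS⟩ := (R.fg (j + (m + 1))).fg_top
    refine ⟨S.biUnion fun x => (a x).support, fun x => ?_⟩
    have hx : x ∈ Submodule.span 𝒜.A (S : Set (R.P (j + (m + 1))).M) := by rw [hS]; trivial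
    induction hx using Submodule.span_induction with
    | mem x hx => exact Finset.subset_biUnion_of_mem (fun x => (a x).support) hx
    | zero => simp
    | add x y _ _ h1 h2 =>
      rw [map_add]
      exact Finsupp.support_add.trans (Finset.union_subset h1 h2)
    | smul c x _ h1 =>
      rw [map_smul]
      exact Finsupp.support_smul.trans h1
  obtain ⟨S, hS⟩ := hfin
  refine ⟨I, S, fun k => ⟨fun n => Finsupp.lapply k ∘ₗ α (n + 1), fun n x => hα (n + 1) x k⟩,
    fun k => φ' ∘ₗ Finsupp.lsingle k, fun x => ?_⟩
  rw [hh]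
  conv_lhs => rw [← Finsupp.sum_single (a x)]
  rw [Finsupp.sum_of_support_subset _ (hS x) _ (fun i _ => Finsupp.single_zero i), map_sum]
  rfl

lemma span_top (hT : IsTrivialGMod T)
    (μ : ∀ i j : ℕ, ExtQ T R i →ₗ[F] ExtQ T R j →ₗ[F] ExtQ T R (i + j))
    (hμ : IsYonedaMul T R R μ) (i j : ℕ) (hf : Fac R i j) :
    Submodule.span F {z : ExtQ T R (i + j) | ∃ x y, z = μ i j x y} = ⊤ := by
  rw [eq_top_iff]
  rintro z -
  obtain ⟨⟨h, hh⟩, rfl⟩ := Submodule.mkQ_surjective _ z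
  obtain ⟨I, s, L, f, hs⟩ := hf (h ∘ₗ castP R (Nat.add_comm j i))
  let c : I → HomSp T R (i + j) := fun k => f k ∘ₗ (L k).toLift.ℓ (i + j) i rfl
  have hsum : (⟨h, hh⟩ : cocyc T R (i + j)) = ∑ k ∈ s, ⟨c k, all_cocyc R hT _ _⟩ := by
    apply Subtype.ext
    rw [AddSubmonoidClass.coe_finsetSum]
    refine LinearMap.ext fun x => ?_
    rw [LinearMap.sum_apply]
    have := hs (castP R (Nat.add_comm i j) x)
    rw [LinearMap.comp_apply, castP_castP] at this
    exact this
  rw [hsum, map_sum]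
  refine Submodule.sum_mem _ fun k _ => Submodule.subset_span ?_
  exact ⟨extCls T (all_cocyc R hT i (f k)),
    extCls T (all_cocyc R hT j (R.aug.lin ∘ₗ (L k).ℓ 0)),
    (hμ i j (f k) _ _ _ (L k).toLift (all_cocyc R hT _ _)).symm⟩

lemma fac_all (hA : 𝒜.Standing) (hT : IsTrivialGMod T) (p d : ℕ)
    (hgen : ∀ n : ℕ, (R.P n).GenInDeg (jump d p n : ℤ)) (i j : ℕ)
    (hij : jump d p (i + j) = jump d p i + jump d p j) : Fac R i j := by
  obtain ⟨gT, hgT⟩ := exists_ofGMod T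
  obtain ⟨g, hg⟩ := exists_gr R
  cases i with
  | zero => exact fac_zero R hT j gT hgT g hg
  | succ m =>
    refine fac_succ R hA hT m j gT hgT g hg _ _ _ ?_ (hgen (m + 1)) (hgen j) (hgen (j + (m + 1)))
    rw [Nat.add_comm j, hij]
    push_cast
    ring

end Assemble

end PKAux

open GradedAlg in
/-- **Lemma 2.9.** Suppose `P` is a minimal graded projective resolution of the trivial
`A`-module `A_0` in which each `P_n` is finitely generated with generators in degree
`δ^d_p(n)`.  If `δ^d_p(i+j) = δ^d_p(i) + δ^d_p(j)` then the Yoneda multiplication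
`Ext^i_A(A_0,A_0) ⊗_F Ext^j_A(A_0,A_0) → Ext^{i+j}_A(A_0,A_0)` is surjective; moreover
`Ext^{i+j} = Ext^i · Ext^j = Ext^j · Ext^i`. -/
theorem yoneda_mul_surjective_of_jump_additive
    {F : Type} [Field F] (𝒜 : GradedAlg F) (hA : 𝒜.Standing)
    (p d : ℕ) (hp : 2 ≤ p) (hpd : p ≤ d)
    (T : 𝒜.GMod) (hT : IsTrivialGMod T)
    (R : MinRes T)
    (hgen : ∀ n : ℕ, (R.P n).GenInDeg (jump d p n : ℤ))
    (μ : ∀ i j : ℕ, ExtQ T R i →ₗ[F] ExtQ T R j →ₗ[F] ExtQ T R (i + j))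
    (hμ : IsYonedaMul T R R μ)
    (i j : ℕ) (hij : jump d p (i + j) = jump d p i + jump d p j) :
    Function.Surjective (TensorProduct.lift (μ i j)) ∧
    Submodule.span F {z : ExtQ T R (i + j) | ∃ x y, z = μ i j x y} = ⊤ ∧
    Submodule.span F {z : ExtQ T R (j + i) | ∃ x y, z = μ j i x y} = ⊤ := by
  have h1 := PKAux.span_top R hT μ hμ i j (PKAux.fac_all R hA hT p d hgen i j hij)
  have h2 := PKAux.span_top R hT μ hμ j i (PKAux.fac_all R hA hT p d hgen j i
    (by rw [Nat.add_comm j i, hij, Nat.add_comm]))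
  refine ⟨?_, h1, h2⟩
  rw [← LinearMap.range_eq_top, eq_top_iff, ← h1, Submodule.span_le]
  rintro _ ⟨x, y, rfl⟩
  exact ⟨x ⊗ₜ[F] y, TensorProduct.lift.tmul x y⟩
end
end

section
/- Let A be a piecewise-Koszul algebra with period p and jump degree d, and let M be a piecewise-Koszul A-module generated in degree s, with graded Jacobson radical J = ⊕_{i≥1} A_i. Then for every n ≥ 1 there is an exact sequence 0 → Ext^{n−1}_A(JM,A_0) → Ext^n_A(M/JM,A_0) → Ext^n_A(M,A_0) → 0, and in the shift-grading all three modules in this sequence are concentrated in shift-degree δ^d_p(n)+s. -/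
noncomputable section

namespace GradedAlg

variable {F : Type} [Field F] {𝒜 : GradedAlg F}

/-! ### Homogeneous components -/

theorem GMod.isInternal (M : 𝒜.GMod) : DirectSum.IsInternal M.grading :=
  DirectSum.isInternal_submodule_of_iSupIndep_of_iSup_eq_top M.indep M.sup_eq_top

/-- The decomposition attached to the grading of a graded module. -/
@[reducible]
def GMod.dec (M : 𝒜.GMod) : DirectSum.Decomposition M.grading :=
  M.isInternal.chooseDecomposition

/-- The projection onto the component of degree `j`. -/
def GMod.pr (M : 𝒜.GMod) (j : ℤ) : M.M →ₗ[F] M.M :=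
  letI := M.dec
  (M.grading j).subtype ∘ₗ DirectSum.component F ℤ (fun i => ↥(M.grading i)) j ∘ₗ
    (DirectSum.decomposeLinearEquiv M.grading).toLinearMap

theorem GMod.pr_mem (M : 𝒜.GMod) (j : ℤ) (x : M.M) : M.pr j x ∈ M.grading j := by
  simp [GMod.pr]

theorem GMod.pr_same (M : 𝒜.GMod) {j : ℤ} {x : M.M} (hx : x ∈ M.grading j) :
    M.pr j x = x := by
  letI := M.dec
  exact DirectSum.decompose_of_mem_same M.grading hx

theorem GMod.pr_other (M : 𝒜.GMod) {i j : ℤ} {x : M.M} (hx : x ∈ M.grading i) (h : i ≠ j) :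
    M.pr j x = 0 := by
  letI := M.dec
  exact DirectSum.decompose_of_mem_ne M.grading hx h

theorem GMod.exists_sum (M : 𝒜.GMod) (x : M.M) :
    ∃ S : Finset ℤ, ∑ j ∈ S, M.pr j x = x ∧ ∀ j, j ∉ S → M.pr j x = 0 := by
  classical
  letI := M.dec
  refine ⟨(DirectSum.decompose M.grading x).support,
    DirectSum.sum_support_decompose M.grading x, ?_⟩
  intro j hj
  have : (DirectSum.decompose M.grading x) j = 0 := by simpa using hj
  change ((DirectSum.decompose M.grading x j : M.grading j) : M.M) = 0
  rw [this]; rfl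

theorem GMod.ind (M : 𝒜.GMod) {C : M.M → Prop} (h : ∀ j, ∀ x ∈ M.grading j, C x)
    (hadd : ∀ x y, C x → C y → C (x + y)) (x : M.M) : C x := by
  have hx : x ∈ ⨆ j, M.grading j := by rw [M.sup_eq_top]; trivial
  exact Submodule.iSup_induction M.grading (motive := C) hx h (h 0 0 (zero_mem _)) hadd

theorem GMod.eq_zero_of_pr (M : 𝒜.GMod) (x : M.M) (h : ∀ j, M.pr j x = 0) : x = 0 := by
  obtain ⟨S, hS, _⟩ := M.exists_sum x
  rw [← hS]; exact Finset.sum_eq_zero fun j _ => h j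

/-- Homogeneous components in the algebra. -/
def apr (𝒜 : GradedAlg F) (e : ℕ) (a : 𝒜.A) : 𝒜.A := (DirectSum.decompose 𝒜.grading a e : 𝒜.A)

theorem apr_mem (e : ℕ) (a : 𝒜.A) : 𝒜.apr e a ∈ 𝒜.grading e := by simp [apr]

theorem apr_sum (a : 𝒜.A) : ∃ S : Finset ℕ, ∑ e ∈ S, 𝒜.apr e a = a ∧
    ∀ e, e ∉ S → 𝒜.apr e a = 0 := by
  classical
  refine ⟨(DirectSum.decompose 𝒜.grading a).support,
    DirectSum.sum_support_decompose 𝒜.grading a, ?_⟩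
  intro j hj
  have : (DirectSum.decompose 𝒜.grading a) j = 0 := by simpa using hj
  rw [apr, this]; rfl

theorem mem_jideal (a : 𝒜.A) : a ∈ 𝒜.jideal ↔ 𝒜.apr 0 a = 0 :=
  HomogeneousIdeal.mem_irrelevant_iff 𝒜.grading a

theorem mem_jideal_of_pos {e : ℕ} (he : e ≠ 0) {a : 𝒜.A} (ha : a ∈ 𝒜.grading e) :
    a ∈ 𝒜.jideal := by
  rw [mem_jideal]
  exact DirectSum.decompose_of_mem_ne 𝒜.grading ha he

theorem sub_apr_zero_mem (a : 𝒜.A) : a - 𝒜.apr 0 a ∈ 𝒜.jideal := by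
  rw [mem_jideal]
  simp [apr, DirectSum.decompose_sub]

instance jideal_twoSided (𝒜 : GradedAlg F) : 𝒜.jideal.IsTwoSided := by
  refine ⟨fun {a} b ha => ?_⟩
  rw [mem_jideal] at *
  have : ∀ x, 𝒜.apr 0 x = GradedRing.projZeroRingHom 𝒜.grading x := fun x => rfl
  rw [this] at *
  rw [map_mul, ha, zero_mul]

theorem GMod.pr_smul_hom (M : 𝒜.GMod) {e : ℕ} {a : 𝒜.A} (ha : a ∈ 𝒜.grading e) (i : ℤ) (x : M.M) :
    M.pr i (a • x) = a • M.pr (i - e) x := by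
  refine M.ind (C := fun x => M.pr i (a • x) = a • M.pr (i - e) x) ?_ ?_ x
  · intro j x hx
    have h1 := M.smul_mem ha hx
    by_cases h : (e : ℤ) + j = i
    · subst h
      rw [M.pr_same h1, show (e : ℤ) + j - e = j by ring, M.pr_same hx]
    · rw [M.pr_other h1 h, M.pr_other hx (by intro h'; apply h; omega), smul_zero]
  · intro x y hx hy
    simp only [smul_add, map_add, hx, hy]

theorem GMod.pr_smul (M : 𝒜.GMod) (a : 𝒜.A) (i : ℤ) (x : M.M) :
    ∃ S : Finset ℕ, M.pr i (a • x) = ∑ e ∈ S, 𝒜.apr e a • M.pr (i - e) x := by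
  obtain ⟨S, hS, _⟩ := apr_sum a
  refine ⟨S, ?_⟩
  conv_lhs => rw [← hS, Finset.sum_smul, map_sum]
  exact Finset.sum_congr rfl fun e _ => M.pr_smul_hom (apr_mem e a) i x

/-! ### Maps of a given degree -/

/-- `f` is homogeneous of degree `k`. -/
def IsDeg {M N : 𝒜.GMod} (f : M.M →ₗ[𝒜.A] N.M) (k : ℤ) : Prop :=
  ∀ j, ∀ x ∈ M.grading j, f x ∈ N.grading (j + k)

theorem IsDeg.pr {M N : 𝒜.GMod} {f : M.M →ₗ[𝒜.A] N.M} {k : ℤ} (hf : IsDeg f k) (j : ℤ) (x : M.M) :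
    N.pr (j + k) (f x) = f (M.pr j x) := by
  refine M.ind (C := fun x => N.pr (j + k) (f x) = f (M.pr j x)) ?_ ?_ x
  · intro i x hx
    by_cases h : i = j
    · subst h
      rw [N.pr_same (hf _ _ hx), M.pr_same hx]
    · rw [N.pr_other (hf _ _ hx) (by omega), M.pr_other hx h, map_zero]
  · intro x y hx hy
    simp only [map_add, hx, hy]

theorem IsDeg.pr0 {M N : 𝒜.GMod} {f : M.M →ₗ[𝒜.A] N.M} (hf : IsDeg f 0) (j : ℤ) (x : M.M) :
    N.pr j (f x) = f (M.pr j x) := by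
  simpa using hf.pr j x

theorem GHom.isDeg {M N : 𝒜.GMod} (f : GHom M N) : IsDeg f.lin 0 := by
  intro j x hx
  simpa using f.grad j x hx

theorem IsDeg.comp {M N K : 𝒜.GMod} {g : N.M →ₗ[𝒜.A] K.M} {f : M.M →ₗ[𝒜.A] N.M} {a b : ℤ}
    (hg : IsDeg g b) (hf : IsDeg f a) : IsDeg (g ∘ₗ f) (a + b) := by
  intro j x hx
  rw [← add_assoc]
  exact hg _ _ (hf _ _ hx)

theorem IsDeg.comp0 {M N K : 𝒜.GMod} {g : N.M →ₗ[𝒜.A] K.M} {f : M.M →ₗ[𝒜.A] N.M}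
    (hg : IsDeg g 0) (hf : IsDeg f 0) : IsDeg (g ∘ₗ f) 0 := by
  simpa using hg.comp hf

/-- The degree `k` part of a linear map. -/
theorem exists_degPart {M N : 𝒜.GMod} (h : M.M →ₗ[𝒜.A] N.M) (k : ℤ) :
    ∃ h' : M.M →ₗ[𝒜.A] N.M, IsDeg h' k ∧
      ∀ j, ∀ x ∈ M.grading j, h' x = N.pr (j + k) (h x) := by
  classical
  letI := M.dec
  let H : M.M →ₗ[F] N.M :=
    (DirectSum.toModule F ℤ N.M (fun j =>
      (N.pr (j + k)) ∘ₗ (h.restrictScalars F) ∘ₗ (M.grading j).subtype)) ∘ₗ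
      (DirectSum.decomposeLinearEquiv M.grading).toLinearMap
  have hH : ∀ j, ∀ x ∈ M.grading j, H x = N.pr (j + k) (h x) := by
    intro j x hx
    simp only [H, LinearMap.comp_apply, LinearEquiv.coe_coe, DirectSum.decomposeLinearEquiv_apply]
    rw [DirectSum.decompose_of_mem M.grading hx]
    erw [DirectSum.toModule_lof]
    rfl
  have hs : ∀ (a : 𝒜.A) (x : M.M), H (a • x) = a • H x := by
    intro a x
    obtain ⟨S, hS, _⟩ := apr_sum a
    have key : ∀ e, H (𝒜.apr e a • x) = 𝒜.apr e a • H x := by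
      intro e
      refine M.ind (C := fun x => H (𝒜.apr e a • x) = 𝒜.apr e a • H x) ?_ ?_ x
      · intro j x hx
        rw [hH _ _ (M.smul_mem (apr_mem e a) hx), hH _ _ hx, map_smul,
          N.pr_smul_hom (apr_mem e a)]
        congr 2; congr 1; ring
      · intro x y hx hy
        simp only [smul_add, map_add, hx, hy]
    rw [← hS, Finset.sum_smul, map_sum, Finset.sum_smul]
    exact Finset.sum_congr rfl fun e _ => key e
  refine ⟨{ toFun := H, map_add' := H.map_add, map_smul' := hs }, ?_, hH⟩
  intro j x hx
  change H x ∈ _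
  rw [hH j x hx]
  exact N.pr_mem _ _

/-- Graded lifting property of projectives. -/
theorem exists_lift {P X Y : 𝒜.GMod} (hP : Module.Projective 𝒜.A P.M)
    (f : P.M →ₗ[𝒜.A] X.M) (g : Y.M →ₗ[𝒜.A] X.M) {k : ℤ} (hf : IsDeg f k) (hg : IsDeg g 0)
    (hr : LinearMap.range f ≤ LinearMap.range g) :
    ∃ h : P.M →ₗ[𝒜.A] Y.M, IsDeg h k ∧ g ∘ₗ h = f := by
  obtain ⟨h, hh⟩ := Module.projective_lifting_property g.rangeRestrict
    (f.codRestrict (LinearMap.range g) fun x => hr ⟨x, rfl⟩) g.surjective_rangeRestrict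
  have hh' : ∀ x, g (h x) = f x := fun x => congrArg Subtype.val (LinearMap.congr_fun hh x)
  obtain ⟨h', hd, hv⟩ := exists_degPart (M := P) (N := Y) h k
  refine ⟨h', hd, ?_⟩
  ext x
  refine P.ind (C := fun x => g (h' x) = f x) ?_ ?_ x
  · intro j x hx
    rw [hv j x hx, ← hg.pr0, hh', X.pr_same (hf j x hx)]
  · intro x y hx hy
    simp only [map_add, hx, hy]

/-! ### Homogeneous submodules and Nakayama -/

/-- Homogeneous submodules. -/
def IsHomog {M : 𝒜.GMod} (K : Submodule 𝒜.A M.M) : Prop := ∀ x ∈ K, ∀ j, M.pr j x ∈ K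

theorem isHomog_range {M N : 𝒜.GMod} {f : M.M →ₗ[𝒜.A] N.M} {k : ℤ} (hf : IsDeg f k) :
    IsHomog (LinearMap.range f) := by
  rintro _ ⟨x, rfl⟩ j
  refine ⟨M.pr (j - k) x, ?_⟩
  rw [← hf.pr, sub_add_cancel]

theorem isHomog_ker {M N : 𝒜.GMod} {f : M.M →ₗ[𝒜.A] N.M} {k : ℤ} (hf : IsDeg f k) :
    IsHomog (LinearMap.ker f) := by
  intro x hx j
  rw [LinearMap.mem_ker] at *
  rw [← hf.pr, hx, map_zero]

theorem isHomog_iSup {M : 𝒜.GMod} {ι : Type*} (K : ι → Submodule 𝒜.A M.M)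
    (hK : ∀ i, IsHomog (K i)) : IsHomog (⨆ i, K i) := by
  intro x hx j
  refine Submodule.iSup_induction K (motive := fun x => M.pr j x ∈ ⨆ i, K i) hx ?_ ?_ ?_
  · intro i x hx
    exact Submodule.mem_iSup_of_mem i (hK i x hx j)
  · simp
  · intro x y hx hy
    rw [map_add]; exact add_mem hx hy

/-- Bounded below graded modules. -/
def BddBelowBy (M : 𝒜.GMod) (b : ℤ) : Prop := ∀ i < b, ∀ x, M.pr i x = 0

theorem exists_bdd (M : 𝒜.GMod) (h : Module.Finite 𝒜.A M.M) : ∃ b, BddBelowBy M b := by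
  classical
  obtain ⟨S, hS⟩ := h.fg_top
  choose D hD1 hD2 using M.exists_sum
  obtain ⟨b, hb⟩ := (S.biUnion D).bddBelow
  refine ⟨b, ?_⟩
  intro i hi x
  have hx : x ∈ Submodule.span 𝒜.A (S : Set M.M) := by rw [hS]; trivial
  induction hx using Submodule.closure_induction with
  | zero => simp
  | add x y _ _ hx hy => rw [map_add, hx, hy, add_zero]
  | smul_mem a x hx =>
    obtain ⟨E, hE⟩ := M.pr_smul a i x
    rw [hE]
    refine Finset.sum_eq_zero fun e _ => ?_
    rw [hD2 x, smul_zero]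
    intro hmem
    have : b ≤ i - e := hb (by
      simp only [Finset.coe_biUnion, Set.mem_iUnion]
      exact ⟨x, hx, hmem⟩)
    omega

/-- Components of elements of `J L`. -/
theorem pr_mem_of_mem_smul {M : 𝒜.GMod} (K L : Submodule 𝒜.A M.M) (i : ℤ)
    (h : ∀ j < i, ∀ x ∈ L, M.pr j x ∈ K) {y : M.M} (hy : y ∈ 𝒜.jideal • L) : M.pr i y ∈ K := by
  refine Submodule.smul_induction_on hy ?_ ?_
  · intro a ha x hx
    obtain ⟨E, hE⟩ := M.pr_smul a i x
    rw [hE]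
    refine Submodule.sum_mem _ fun e _ => ?_
    by_cases he : e = 0
    · subst he
      rw [(mem_jideal a).1 ha, zero_smul]; exact zero_mem _
    · exact K.smul_mem _ (h _ (by omega) x hx)
  · intro x y hx hy
    rw [map_add]; exact add_mem hx hy

theorem nakayama {M : 𝒜.GMod} (hM : Module.Finite 𝒜.A M.M) (K L : Submodule 𝒜.A M.M)
    (hK : IsHomog K) (h : L ≤ K ⊔ 𝒜.jideal • L) : L ≤ K := by
  obtain ⟨b, hb⟩ := exists_bdd M hM
  have key : ∀ m : ℕ, ∀ i : ℤ, i < b + m → ∀ x ∈ L, M.pr i x ∈ K := by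
    intro m
    induction m with
    | zero =>
      intro i hi x hx
      rw [hb i (by simpa using hi)]; exact zero_mem _
    | succ m ih =>
      intro i hi x hx
      obtain ⟨k, hk, y, hy, rfl⟩ := Submodule.mem_sup.1 (h hx)
      rw [map_add]
      refine add_mem (hK k hk i) (pr_mem_of_mem_smul K L i ?_ hy)
      intro j hj z hz
      exact ih j (by push_cast at hi; omega) z hz
  intro x hx
  obtain ⟨S, hS, _⟩ := M.exists_sum x
  rw [← hS]
  refine Submodule.sum_mem _ fun j _ => key (j - b + 1).toNat j (by omega) x hx

/-! ### Modules generated in one degree -/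

theorem bdd_of_gen {M : 𝒜.GMod} {t : ℤ} (h : M.GenInDeg t) : BddBelowBy M t := by
  intro i hi x
  have hx : x ∈ Submodule.span 𝒜.A (M.grading t : Set M.M) := by
    rw [show _ = _ from h]; trivial
  induction hx using Submodule.closure_induction with
  | zero => simp
  | add x y _ _ hx hy => rw [map_add, hx, hy, add_zero]
  | smul_mem a x hx =>
    obtain ⟨E, hE⟩ := M.pr_smul a i x
    rw [hE]
    refine Finset.sum_eq_zero fun e _ => ?_
    rw [M.pr_other hx (by omega), smul_zero]

theorem pr_eq_zero_of_mem_J {M : 𝒜.GMod} {t : ℤ} (h : BddBelowBy M t) {x : M.M}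
    (hx : x ∈ 𝒜.jideal • (⊤ : Submodule 𝒜.A M.M)) : M.pr t x = 0 := by
  have := pr_mem_of_mem_smul (⊥ : Submodule 𝒜.A M.M) ⊤ t
    (fun j hj x _ => by rw [h j hj x]; exact zero_mem _) hx
  simpa using this

theorem sub_pr_mem_J {M : 𝒜.GMod} {t : ℤ} (h : M.GenInDeg t) (x : M.M) :
    x - M.pr t x ∈ 𝒜.jideal • (⊤ : Submodule 𝒜.A M.M) := by
  have hx : x ∈ Submodule.span 𝒜.A (M.grading t : Set M.M) := by
    rw [show _ = _ from h]; trivial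
  induction hx using Submodule.closure_induction with
  | zero => simp
  | add x y _ _ hx hy => rw [map_add, add_sub_add_comm]; exact add_mem hx hy
  | smul_mem a x hx =>
    have h2 : M.pr t ((a - 𝒜.apr 0 a) • x) = 0 :=
      pr_eq_zero_of_mem_J (bdd_of_gen h) (Submodule.smul_mem_smul (sub_apr_zero_mem a) trivial)
    have h3 : M.pr t (𝒜.apr 0 a • x) = 𝒜.apr 0 a • x :=
      M.pr_same (by simpa using M.smul_mem (apr_mem 0 a) hx)
    rw [sub_smul, map_sub, h3, sub_eq_zero] at h2
    rw [h2, ← sub_smul]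
    exact Submodule.smul_mem_smul (sub_apr_zero_mem a) trivial

theorem gen_of_surj {M N : 𝒜.GMod} {t k : ℤ} (h : M.GenInDeg t) {ι : Type*}
    (f : ι → M.M →ₗ[𝒜.A] N.M)
    (hf : ∀ i, IsDeg (f i) k) (hs : (⨆ i, LinearMap.range (f i)) = ⊤) : N.GenInDeg (t + k) := by
  unfold GMod.GenInDeg at *
  rw [eq_top_iff, ← hs]
  refine iSup_le fun i => ?_
  rw [LinearMap.range_eq_map, ← h, Submodule.map_span]
  refine Submodule.span_mono ?_
  rintro _ ⟨x, hx, rfl⟩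
  exact hf i _ _ hx

/-! ### Semisimplicity -/

theorem semisimple_of_killed (hA : 𝒜.Standing) {V : Type} [AddCommGroup V] [Module 𝒜.A V]
    (h : ∀ a ∈ 𝒜.jideal, ∀ v : V, a • v = 0) : IsSemisimpleModule 𝒜.A V := by
  have := hA.semisimple
  let q : ↥(𝒜.grading 0) →+* 𝒜.A ⧸ 𝒜.jideal :=
    { toFun := fun x => Ideal.Quotient.mk 𝒜.jideal (x : 𝒜.A)
      map_one' := rfl
      map_zero' := rfl
      map_add' := fun _ _ => rfl
      map_mul' := fun _ _ => rfl }
  have hq : Function.Surjective q := by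
    intro y
    obtain ⟨a, rfl⟩ := Ideal.Quotient.mk_surjective y
    refine ⟨⟨𝒜.apr 0 a, apr_mem 0 a⟩, ?_⟩
    change Ideal.Quotient.mk 𝒜.jideal (𝒜.apr 0 a) = Ideal.Quotient.mk 𝒜.jideal a
    symm
    exact Ideal.Quotient.eq.2 (sub_apr_zero_mem a)
  have hs : IsSemisimpleRing (𝒜.A ⧸ 𝒜.jideal) := RingHom.isSemisimpleRing_of_surjective q hq
  have hV : Module.IsTorsionBySet 𝒜.A V (𝒜.jideal : Set 𝒜.A) := fun v a => h a.1 a.2 v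
  letI := hV.module
  exact hV.isSemisimpleModule_iff.1 inferInstance

theorem quot_killed {V : Type} [AddCommGroup V] [Module 𝒜.A V] :
    ∀ a ∈ 𝒜.jideal, ∀ v : V ⧸ (𝒜.jideal • (⊤ : Submodule 𝒜.A V)), a • v = 0 := by
  intro a ha v
  obtain ⟨v, rfl⟩ := Submodule.Quotient.mk_surjective _ v
  rw [← Submodule.Quotient.mk_smul, Submodule.Quotient.mk_eq_zero]
  exact Submodule.smul_mem_smul ha trivial

theorem quotRing_killed : ∀ a ∈ 𝒜.jideal, ∀ v : 𝒜.A ⧸ 𝒜.jideal, a • v = 0 := by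
  intro a ha v
  obtain ⟨v, rfl⟩ := Submodule.Quotient.mk_surjective _ v
  rw [← Submodule.Quotient.mk_smul, Submodule.Quotient.mk_eq_zero]
  exact Ideal.mul_mem_right v _ ha

theorem map_J_eq_zero {V W : Type} [AddCommGroup V] [Module 𝒜.A V] [AddCommGroup W] [Module 𝒜.A W]
    (h : ∀ a ∈ 𝒜.jideal, ∀ v : W, a • v = 0) (f : V →ₗ[𝒜.A] W) {x : V}
    (hx : x ∈ 𝒜.jideal • (⊤ : Submodule 𝒜.A V)) : f x = 0 := by
  refine Submodule.smul_induction_on hx ?_ ?_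
  · intro a ha v _
    rw [map_smul, h a ha]
  · intro x y hx hy
    rw [map_add, hx, hy, add_zero]

theorem map_J_mem {V W : Type} [AddCommGroup V] [Module 𝒜.A V] [AddCommGroup W] [Module 𝒜.A W]
    (f : V →ₗ[𝒜.A] W) {x : V}
    (hx : x ∈ 𝒜.jideal • (⊤ : Submodule 𝒜.A V)) : f x ∈ 𝒜.jideal • (⊤ : Submodule 𝒜.A W) := by
  have h : f x ∈ Submodule.map f (𝒜.jideal • (⊤ : Submodule 𝒜.A V)) := ⟨x, hx, rfl⟩
  rw [Submodule.map_smul''] at h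
  exact Submodule.smul_mono le_rfl le_top h

/-- Splitting of maps between projectives generated in the same degree. -/
theorem exists_retraction (hA : 𝒜.Standing) {P P' : 𝒜.GMod} (hP' : Module.Projective 𝒜.A P'.M)
    (φ : P.M →ₗ[𝒜.A] P'.M) (hφ : IsDeg φ 0) {t : ℤ} (hg : P.GenInDeg t) (hg' : P'.GenInDeg t)
    (hinj : ∀ x ∈ P.grading t, φ x = 0 → x = 0) :
    ∃ ρ : P'.M →ₗ[𝒜.A] P.M, IsDeg ρ 0 ∧ ∀ x, ρ (φ x) = x := by
  have hss := semisimple_of_killed hA (quot_killed (𝒜 := 𝒜) (V := P'.M))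
  have hle : 𝒜.jideal • (⊤ : Submodule 𝒜.A P.M) ≤
      (𝒜.jideal • (⊤ : Submodule 𝒜.A P'.M)).comap φ := fun x hx => map_J_mem φ hx
  let φb := Submodule.mapQ _ _ φ hle
  have hφb : Function.Injective φb := by
    rw [injective_iff_map_eq_zero]
    intro v hv
    obtain ⟨x, rfl⟩ := Submodule.Quotient.mk_surjective _ v
    have hx : φ x ∈ 𝒜.jideal • (⊤ : Submodule 𝒜.A P'.M) := by
      rw [← Submodule.Quotient.mk_eq_zero]; exact hv
    rw [Submodule.Quotient.mk_eq_zero]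
    have h1 := pr_eq_zero_of_mem_J (bdd_of_gen hg') hx
    rw [hφ.pr0] at h1
    have h2 := hinj _ (P.pr_mem t x) h1
    have h3 := sub_pr_mem_J hg x
    rwa [h2, sub_zero] at h3
  obtain ⟨r, hr⟩ := IsSemisimpleModule.extension_property φb hφb LinearMap.id
  obtain ⟨h, hh⟩ := Module.projective_lifting_property
    (𝒜.jideal • (⊤ : Submodule 𝒜.A P.M)).mkQ
    (r ∘ₗ (𝒜.jideal • (⊤ : Submodule 𝒜.A P'.M)).mkQ) (Submodule.mkQ_surjective _)
  obtain ⟨ρ, hρ, hρv⟩ := exists_degPart (M := P') (N := P) h 0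
  refine ⟨ρ, hρ, ?_⟩
  have key : ∀ x ∈ P.grading t, ρ (φ x) = x := by
    intro x hx
    have hx' : φ x ∈ P'.grading t := by simpa using hφ t x hx
    rw [hρv t _ hx', add_zero]
    have h1 : h (φ x) - x ∈ 𝒜.jideal • (⊤ : Submodule 𝒜.A P.M) := by
      rw [← Submodule.Quotient.eq]
      have h2 := LinearMap.congr_fun hh (φ x)
      have h3 := LinearMap.congr_fun hr (Submodule.Quotient.mk x)
      exact h2.trans h3
    have h4 := pr_eq_zero_of_mem_J (bdd_of_gen hg) h1
    rw [map_sub, P.pr_same hx, sub_eq_zero] at h4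
    exact h4
  have h5 : ρ ∘ₗ φ = LinearMap.id := LinearMap.ext_on (show _ = _ from hg) key
  exact fun x => LinearMap.congr_fun h5 x

theorem T_killed {T : 𝒜.GMod} (hT : IsTrivialGMod T) : ∀ a ∈ 𝒜.jideal, ∀ v : T.M, a • v = 0 := by
  obtain ⟨e⟩ := hT.2
  intro a ha v
  apply e.injective
  rw [map_smul, quotRing_killed a ha, map_zero]

theorem exists_dual (hA : 𝒜.Standing) {T Q : 𝒜.GMod} (hT : IsTrivialGMod T)
    (hfin : Module.Finite 𝒜.A Q.M) (hQ : ∀ a ∈ 𝒜.jideal, ∀ v : Q.M, a • v = 0) :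
    ∃ (k : ℕ) (r : Fin k → T.M →ₗ[𝒜.A] Q.M) (i : Fin k → Q.M →ₗ[𝒜.A] T.M),
      ∀ x, ∑ l, r l (i l x) = x := by
  obtain ⟨e⟩ := hT.2
  obtain ⟨k, f, hf⟩ := Module.Finite.exists_fin' 𝒜.A Q.M
  let r : Fin k → T.M →ₗ[𝒜.A] Q.M := fun l =>
    (Submodule.liftQ 𝒜.jideal (f ∘ₗ LinearMap.single 𝒜.A (fun _ => 𝒜.A) l) (by
      intro a ha
      rw [LinearMap.mem_ker, ← mul_one a, ← smul_eq_mul, map_smul, hQ a ha])) ∘ₗ e.toLinearMap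
  let p : (Fin k → T.M) →ₗ[𝒜.A] Q.M := LinearMap.lsum 𝒜.A (fun _ => T.M) ℕ r
  have hpv : ∀ y, p y = ∑ l, r l (y l) := by
    intro y; simp [p, LinearMap.lsum_apply]
  have hp : Function.Surjective p := by
    intro q
    obtain ⟨a, rfl⟩ := hf q
    refine ⟨fun l => e.symm (Submodule.Quotient.mk (a l)), ?_⟩
    rw [hpv]
    have : ∀ l, r l (e.symm (Submodule.Quotient.mk (a l))) = f (Pi.single l (a l)) := by
      intro l
      simp only [r, LinearMap.comp_apply, LinearEquiv.coe_coe, LinearEquiv.apply_symm_apply]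
      rfl
    simp only [this]
    rw [← map_sum, Finset.univ_sum_single]
  have hss : IsSemisimpleModule 𝒜.A T.M := semisimple_of_killed hA (T_killed hT)
  obtain ⟨σ, hσ⟩ := IsSemisimpleModule.lifting_property p hp LinearMap.id
  refine ⟨k, r, fun l => LinearMap.proj l ∘ₗ σ, ?_⟩
  intro x
  have := LinearMap.congr_fun hσ x
  simp only [LinearMap.comp_apply, hpv, LinearMap.id_apply] at this
  exact this

/-! ### Chain maps between minimal resolutions -/

theorem exists_chain {M N : 𝒜.GMod} (R : MinRes M) (R' : MinRes N) (f : M.M →ₗ[𝒜.A] N.M) {k : ℤ}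
    (hf : IsDeg f k) :
    ∃ φ : ∀ n, (R.P n).M →ₗ[𝒜.A] (R'.P n).M, (∀ n, IsDeg (φ n) k) ∧
      (∀ x, R'.aug.lin (φ 0 x) = f (R.aug.lin x)) ∧
      ∀ n x, (R'.d n).lin (φ (n + 1) x) = φ n ((R.d n).lin x) := by
  let S : ∀ n, Type := fun n => {φ : (R.P n).M →ₗ[𝒜.A] (R'.P n).M //
    IsDeg φ k ∧ ∀ x, φ ((R.d n).lin x) ∈ LinearMap.range (R'.d n).lin}
  have h0 : ∃ φ : S 0, ∀ x, R'.aug.lin (φ.1 x) = f (R.aug.lin x) := by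
    obtain ⟨h, hd, hh⟩ := exists_lift (Y := R'.P 0) (R.projective 0) (f ∘ₗ R.aug.lin) R'.aug.lin
      (by simpa using hf.comp R.aug.isDeg) R'.aug.isDeg
      (by rw [LinearMap.range_eq_top.2 R'.aug_surj]; exact le_top)
    have hh' := fun x => LinearMap.congr_fun hh x
    refine ⟨⟨h, hd, fun x => ?_⟩, hh'⟩
    rw [R'.exact_aug, LinearMap.mem_ker]
    have hx : (R.d 0).lin x ∈ LinearMap.ker R.aug.lin := by
      rw [← R.exact_aug]; exact ⟨x, rfl⟩
    have h2 := hh' ((R.d 0).lin x)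
    rw [LinearMap.comp_apply, LinearMap.comp_apply, LinearMap.mem_ker.1 hx, map_zero] at h2
    exact h2
  have hs : ∀ n (φ : S n), ∃ φ' : S (n + 1),
      ∀ x, (R'.d n).lin (φ'.1 x) = φ.1 ((R.d n).lin x) := by
    intro n φ
    obtain ⟨h, hd, hh⟩ := exists_lift (Y := R'.P (n + 1)) (R.projective (n + 1))
      (φ.1 ∘ₗ (R.d n).lin) (R'.d n).lin
      (by simpa using φ.2.1.comp (R.d n).isDeg) (R'.d n).isDeg
      (by rintro _ ⟨x, rfl⟩; exact φ.2.2 x)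
    have hh' := fun x => LinearMap.congr_fun hh x
    refine ⟨⟨h, hd, fun x => ?_⟩, hh'⟩
    rw [R'.exact, LinearMap.mem_ker]
    have hx : (R.d (n + 1)).lin x ∈ LinearMap.ker (R.d n).lin := by
      rw [← R.exact]; exact ⟨x, rfl⟩
    have h2 := hh' ((R.d (n + 1)).lin x)
    rw [LinearMap.comp_apply, LinearMap.comp_apply, LinearMap.mem_ker.1 hx, map_zero] at h2
    exact h2
  obtain ⟨φ0, hφ0⟩ := h0
  choose st hst using hs
  let φ : ∀ n, S n := fun n => Nat.rec φ0 st n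
  exact ⟨fun n => (φ n).1, fun n => (φ n).2.1, hφ0, fun n x => hst n (φ n) x⟩

theorem exists_lift_ungraded {P X Y : Type} [AddCommGroup P] [AddCommGroup X] [AddCommGroup Y]
    [Module 𝒜.A P] [Module 𝒜.A X] [Module 𝒜.A Y] (hP : Module.Projective 𝒜.A P)
    (f : P →ₗ[𝒜.A] X) (g : Y →ₗ[𝒜.A] X)
    (hr : ∀ x, f x ∈ LinearMap.range g) :
    ∃ h : P →ₗ[𝒜.A] Y, ∀ x, g (h x) = f x := by
  obtain ⟨h, hh⟩ := Module.projective_lifting_property g.rangeRestrict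
    (f.codRestrict (LinearMap.range g) hr) g.surjective_rangeRestrict
  exact ⟨h, fun x => congrArg Subtype.val (LinearMap.congr_fun hh x)⟩

/-- A chain endomorphism of a minimal resolution lifting zero is zero modulo `J`. -/
theorem chain_zero {M : 𝒜.GMod} (R : MinRes M) (v : ∀ n, (R.P n).M →ₗ[𝒜.A] (R.P n).M)
    (h0 : ∀ x, R.aug.lin (v 0 x) = 0)
    (hv : ∀ n x, (R.d n).lin (v (n + 1) x) = v n ((R.d n).lin x)) (n : ℕ) (x : (R.P n).M) :
    v n x ∈ 𝒜.jideal • (⊤ : Submodule 𝒜.A (R.P n).M) := by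
  have key : ∀ n, ∃ w : (R.P n).M →ₗ[𝒜.A] (R.P (n + 1)).M,
      (∀ x, v n ((R.d n).lin x) = (R.d n).lin (w ((R.d n).lin x))) ∧
      ∀ x, v n x ∈ 𝒜.jideal • (⊤ : Submodule 𝒜.A (R.P n).M) := by
    intro n
    induction n with
    | zero =>
      obtain ⟨w, hw⟩ := exists_lift_ungraded (R.projective 0) (v 0) (R.d 0).lin
        (fun x => by rw [R.exact_aug]; exact h0 x)
      refine ⟨w, fun x => (hw _).symm, fun x => ?_⟩
      rw [← hw]
      exact R.minimal 0 ⟨_, rfl⟩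
    | succ n ih =>
      obtain ⟨w, hw, _⟩ := ih
      obtain ⟨w', hw'⟩ := exists_lift_ungraded (R.projective (n + 1))
        (v (n + 1) - w ∘ₗ (R.d n).lin) (R.d (n + 1)).lin (fun x => by
          rw [R.exact, LinearMap.mem_ker, LinearMap.sub_apply, map_sub, hv, hw,
            LinearMap.comp_apply, sub_self])
      have hw2 : ∀ x, v (n + 1) x = (R.d (n + 1)).lin (w' x) + w ((R.d n).lin x) := by
        intro x
        rw [hw' x, LinearMap.sub_apply, LinearMap.comp_apply, sub_add_cancel]
      refine ⟨w', fun x => ?_, fun x => ?_⟩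
      · have hx : (R.d (n + 1)).lin x ∈ LinearMap.ker (R.d n).lin := by
          rw [← R.exact]; exact ⟨x, rfl⟩
        rw [hw2, LinearMap.mem_ker.1 hx, map_zero, add_zero]
      · rw [hw2]
        exact add_mem (R.minimal (n + 1) ⟨_, rfl⟩) (map_J_mem w (R.minimal n ⟨_, rfl⟩))
  exact (key n).choose_spec.2 x

/-- Generation degrees of the terms of a minimal resolution of a summand. -/
theorem gen_of_summand {T N : 𝒜.GMod} (RT : MinRes T) (RN : MinRes N) {k : ℕ} {s : ℤ}
    (r : Fin k → T.M →ₗ[𝒜.A] N.M) (i : Fin k → N.M →ₗ[𝒜.A] T.M)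
    (hr : ∀ l, IsDeg (r l) s) (hi : ∀ l, IsDeg (i l) (-s)) (hri : ∀ x, ∑ l, r l (i l x) = x)
    (n : ℕ) {t : ℤ} (ht : (RT.P n).GenInDeg t) : (RN.P n).GenInDeg (t + s) := by
  choose ρ hρd hρ0 hρ using fun l => exists_chain RT RN (r l) (hr l)
  choose ι hιd hι0 hι using fun l => exists_chain RN RT (i l) (hi l)
  let v : ∀ n, (RN.P n).M →ₗ[𝒜.A] (RN.P n).M := fun n =>
    (∑ l, ρ l n ∘ₗ ι l n) - LinearMap.id
  have hvv : ∀ n x, v n x = (∑ l, ρ l n (ι l n x)) - x := by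
    intro n x; simp [v]
  have hv := chain_zero RN v
    (fun x => by
      rw [hvv, map_sub, map_sum]
      simp only [hρ0, hι0, hri, sub_self])
    (fun n x => by
      rw [hvv, hvv, map_sub, map_sum]
      simp only [hρ, hι])
  refine gen_of_surj ht (fun l => ρ l n) (fun l => hρd l n) ?_
  rw [eq_top_iff]
  refine nakayama (RN.fg n) _ _ (isHomog_iSup _ fun l => isHomog_range (hρd l n)) ?_
  intro x _
  have h1 := hv n x
  rw [hvv] at h1
  have h2 : (∑ l, ρ l n (ι l n x)) ∈ ⨆ l, LinearMap.range (ρ l n) :=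
    Submodule.sum_mem _ fun l _ => Submodule.mem_iSup_of_mem l ⟨_, rfl⟩
  rw [show x = (∑ l, ρ l n (ι l n x)) - ((∑ l, ρ l n (ι l n x)) - x) by abel]
  exact sub_mem (Submodule.mem_sup_left h2) (Submodule.mem_sup_right h1)

/-- The inductive step in the construction of the quotient resolution. -/
theorem quot_step {P Y X : 𝒜.GMod} (hPp : Module.Projective 𝒜.A P.M)
    (hPf : Module.Finite 𝒜.A P.M) (hYp : Module.Projective 𝒜.A Y.M)
    (hYf : Module.Finite 𝒜.A Y.M) (f : P.M →ₗ[𝒜.A] X.M) (g : Y.M →ₗ[𝒜.A] X.M)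
    (hf : IsDeg f 0) (hg : IsDeg g 0) (I D : Submodule 𝒜.A P.M) (hI : IsHomog I)
    (e : P.M →ₗ[𝒜.A] P.M) (he : IsDeg e 0) (heI : ∀ x ∈ I, e x = 0) (hfe : ∀ x, f (e x) = f x)
    (hr : LinearMap.range f = LinearMap.range g)
    (hgJ : LinearMap.ker g ≤ 𝒜.jideal • (⊤ : Submodule 𝒜.A Y.M))
    (hDJ : D ≤ 𝒜.jideal • (⊤ : Submodule 𝒜.A P.M)) (hD : D ≤ LinearMap.ker f)
    (hker : LinearMap.ker f ≤ I ⊔ D) :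
    ∃ ψ : P.M →ₗ[𝒜.A] Y.M, IsDeg ψ 0 ∧ Function.Surjective ψ ∧ LinearMap.ker ψ = I ∧
      D.map ψ = LinearMap.ker g := by
  obtain ⟨ψ', hψ'd, hψ'⟩ := exists_lift hPp f g hf hg hr.le
  have hgψ' : ∀ x, g (ψ' x) = f x := fun x => LinearMap.congr_fun hψ' x
  obtain ⟨ψ, hψdef⟩ : ∃ ψ, ψ = ψ' ∘ₗ e := ⟨_, rfl⟩
  have hψd : IsDeg ψ 0 := by rw [hψdef]; exact hψ'd.comp0 he
  have hgψ : ∀ x, g (ψ x) = f x := by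
    intro x; rw [hψdef, LinearMap.comp_apply, hgψ', hfe]
  have hψI : ∀ x ∈ I, ψ x = 0 := by
    intro x hx; rw [hψdef, LinearMap.comp_apply, heI x hx, map_zero]
  have hsurj : Function.Surjective ψ := by
    rw [← LinearMap.range_eq_top, eq_top_iff]
    refine nakayama hYf _ _ (isHomog_range hψd) ?_
    intro y _
    have hy : g y ∈ LinearMap.range f := by rw [hr]; exact ⟨y, rfl⟩
    obtain ⟨x, hx⟩ := hy
    rw [show y = ψ x + (y - ψ x) by abel]
    refine add_mem (Submodule.mem_sup_left ⟨x, rfl⟩) (Submodule.mem_sup_right (hgJ ?_))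
    rw [LinearMap.mem_ker, map_sub, hgψ, hx, sub_self]
  have hkerf : ∀ x, f x = 0 → ∃ u ∈ I, ∃ w ∈ D, u + w = x := fun x hx =>
    Submodule.mem_sup.1 (hker hx)
  refine ⟨ψ, hψd, hsurj, le_antisymm ?_ hψI, ?_⟩
  · obtain ⟨σ, hσ⟩ := Module.projective_lifting_property ψ LinearMap.id hsurj
    have hσ' : ∀ y, ψ (σ y) = y := fun y => LinearMap.congr_fun hσ y
    refine nakayama hPf _ _ hI ?_
    intro x hx
    rw [LinearMap.mem_ker] at hx
    obtain ⟨u, hu, w, hw, rfl⟩ := hkerf x (by rw [← hgψ, hx, map_zero])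
    refine add_mem (Submodule.mem_sup_left hu) (Submodule.mem_sup_right ?_)
    rw [map_add, hψI u hu, zero_add] at hx
    obtain ⟨q, hq⟩ : ∃ q : P.M →ₗ[𝒜.A] P.M, ∀ x, q x = x - σ (ψ x) :=
      ⟨LinearMap.id - σ ∘ₗ ψ, fun _ => rfl⟩
    have h1 : q w ∈ Submodule.map q (𝒜.jideal • (⊤ : Submodule 𝒜.A P.M)) :=
      ⟨w, hDJ hw, rfl⟩
    rw [Submodule.map_smul''] at h1
    have h2 : q w = w := by rw [hq, hx, map_zero, sub_zero]
    rw [h2] at h1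
    refine Submodule.smul_mono le_rfl ?_ h1
    rintro _ ⟨y, -, rfl⟩
    rw [LinearMap.mem_ker, hq, map_sub, hσ', sub_self]
  · ext y
    constructor
    · rintro ⟨x, hx, rfl⟩
      rw [LinearMap.mem_ker, hgψ]
      exact hD hx
    · intro hy
      obtain ⟨x, rfl⟩ := hsurj y
      rw [LinearMap.mem_ker, hgψ] at hy
      obtain ⟨u, hu, w, hw, rfl⟩ := hkerf x hy
      exact ⟨w, hw, by rw [map_add, hψI u hu, zero_add]⟩

/-! ### Ext from a minimal resolution -/

section ExtLemmas

variable {T : 𝒜.GMod} (hT : IsTrivialGMod T) {M : 𝒜.GMod} (R : MinRes M)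

theorem precomp_d_eq_zero (hT : IsTrivialGMod T) (R : MinRes M) (n : ℕ) (f : HomSp T R n) :
    precompF T (R.d n).lin f = 0 := by
  ext x
  exact map_J_eq_zero (T_killed hT) f (R.minimal n ⟨x, rfl⟩)

theorem cocyc_eq_top (hT : IsTrivialGMod T) (R : MinRes M) (n : ℕ) : cocyc T R n = ⊤ := by
  rw [eq_top_iff]
  intro f _
  exact precomp_d_eq_zero hT R n f

theorem extRel_eq_bot (hT : IsTrivialGMod T) (R : MinRes M) (n : ℕ) : extRel T R n = ⊥ := by
  rw [eq_bot_iff]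
  intro f hf
  have hf' : f.1 ∈ cobound T R n := hf
  rw [Submodule.mem_bot]
  apply Subtype.ext
  cases n with
  | zero => exact hf'
  | succ n =>
    obtain ⟨g, hg⟩ := hf'
    rw [← hg]
    exact precomp_d_eq_zero hT R n g

/-- `Ext^n` is the space of cochains, for a minimal resolution. -/
def extEquiv (hT : IsTrivialGMod T) (R : MinRes M) (n : ℕ) : ExtQ T R n ≃ₗ[F] HomSp T R n :=
  (Submodule.quotEquivOfEqBot _ (extRel_eq_bot hT R n)).trans
    (LinearEquiv.ofTop _ (cocyc_eq_top hT R n))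

theorem extComp_eq_top (hT : IsTrivialGMod T) (R : MinRes M) (n : ℕ) {t : ℤ}
    (hg : (R.P n).GenInDeg t) : extComp T R n t = ⊤ := by
  have h : homDeg T R n t = ⊤ := by
    rw [eq_top_iff]
    intro f _ i hi x hx
    have h1 := sub_pr_mem_J hg x
    rw [(R.P n).pr_other hx hi, sub_zero] at h1
    exact map_J_eq_zero (T_killed hT) f h1
  rw [extComp, h, Submodule.comap_top, Submodule.map_top, Submodule.range_mkQ]

end ExtLemmas

theorem T_concentrated {T : 𝒜.GMod} (hT : IsTrivialGMod T) (x : T.M) : x ∈ T.grading 0 := by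
  refine T.ind (C := fun x => x ∈ T.grading 0) ?_ (fun x y hx hy => add_mem hx hy) x
  intro j x hx
  by_cases hj : j = 0
  · rwa [hj] at hx
  · rw [hT.1 j hj, Submodule.mem_bot] at hx
    rw [hx]; exact zero_mem _

/-- The exact sequence of terms of the minimal resolutions. -/
theorem main_terms (hA : 𝒜.Standing) {M JM Q : 𝒜.GMod} {s : ℤ} (hMs : M.GenInDeg s)
    (hJM : IsJM M JM) (π : M.M →ₗ[𝒜.A] Q.M) (hπd : IsDeg π 0) (hπs : Function.Surjective π)
    (hπk : LinearMap.ker π = 𝒜.jideal • (⊤ : Submodule 𝒜.A M.M))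
    (RJ : MinRes JM) (RQ : MinRes Q) (RM : MinRes M) (t : ℕ → ℤ) (ht0 : t 0 = s)
    (hRM : ∀ n, (RM.P n).GenInDeg (t n)) (hRQ : ∀ n, (RQ.P n).GenInDeg (t n)) (n : ℕ) :
    ∃ (φ : (RM.P (n + 1)).M →ₗ[𝒜.A] (RQ.P (n + 1)).M)
      (ρ : (RQ.P (n + 1)).M →ₗ[𝒜.A] (RM.P (n + 1)).M)
      (ψ : (RQ.P (n + 1)).M →ₗ[𝒜.A] (RJ.P n).M),
      (∀ x, ρ (φ x) = x) ∧ IsDeg ψ 0 ∧ Function.Surjective ψ ∧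
        LinearMap.ker ψ = LinearMap.range φ := by
  obtain ⟨φ, hφd, hφ0, hφ⟩ := exists_chain RM RQ π hπd
  have ddM : ∀ n x, (RM.d n).lin ((RM.d (n + 1)).lin x) = 0 := fun n x =>
    LinearMap.mem_ker.1 ((RM.exact n) ▸ ⟨x, rfl⟩)
  have ddQ : ∀ n x, (RQ.d n).lin ((RQ.d (n + 1)).lin x) = 0 := fun n x =>
    LinearMap.mem_ker.1 ((RQ.exact n) ▸ ⟨x, rfl⟩)
  have adM : ∀ x, RM.aug.lin ((RM.d 0).lin x) = 0 := fun x =>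
    LinearMap.mem_ker.1 (RM.exact_aug ▸ ⟨x, rfl⟩)
  have adQ : ∀ x, RQ.aug.lin ((RQ.d 0).lin x) = 0 := fun x =>
    LinearMap.mem_ker.1 (RQ.exact_aug ▸ ⟨x, rfl⟩)
  have exM : ∀ n x, (RM.d n).lin x = 0 → ∃ y, (RM.d (n + 1)).lin y = x := by
    intro n x hx
    have : x ∈ LinearMap.range (RM.d (n + 1)).lin := by rw [RM.exact]; exact hx
    exact this
  have exQ : ∀ n x, (RQ.d n).lin x = 0 → ∃ y, (RQ.d (n + 1)).lin y = x := by
    intro n x hx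
    have : x ∈ LinearMap.range (RQ.d (n + 1)).lin := by rw [RQ.exact]; exact hx
    exact this
  have exaM : ∀ x, RM.aug.lin x = 0 → ∃ y, (RM.d 0).lin y = x := by
    intro x hx
    have : x ∈ LinearMap.range (RM.d 0).lin := by rw [RM.exact_aug]; exact hx
    exact this
  have exaQ : ∀ x, RQ.aug.lin x = 0 → ∃ y, (RQ.d 0).lin y = x := by
    intro x hx
    have : x ∈ LinearMap.range (RQ.d 0).lin := by rw [RQ.exact_aug]; exact hx
    exact this
  -- elements in the generating degree that lie in `J` vanish
  have hzero : ∀ n, ∀ x ∈ (RM.P n).grading (t n), x ∈ LinearMap.range (RM.d n).lin → x = 0 := by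
    intro n x hx hx'
    have := pr_eq_zero_of_mem_J (bdd_of_gen (hRM n)) (RM.minimal n hx')
    rwa [(RM.P n).pr_same hx] at this
  -- retractions
  have hret : ∀ n, ∃ ρ : (RQ.P n).M →ₗ[𝒜.A] (RM.P n).M, IsDeg ρ 0 ∧ ∀ x, ρ (φ n x) = x := by
    intro n
    refine exists_retraction hA (RQ.projective n) (φ n) (hφd n) (hRM n) (hRQ n) ?_
    induction n with
    | zero =>
      intro x hx h
      have h1 : π (RM.aug.lin x) = 0 := by rw [← hφ0, h, map_zero]
      have h2 : RM.aug.lin x ∈ 𝒜.jideal • (⊤ : Submodule 𝒜.A M.M) := by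
        rw [← hπk]; exact h1
      have h3 := pr_eq_zero_of_mem_J (bdd_of_gen hMs) h2
      rw [ht0] at hx
      rw [M.pr_same (RM.aug.grad s x hx)] at h3
      rw [← ht0] at hx
      exact hzero 0 x hx (exaM x h3)
    | succ n ih =>
      obtain ⟨ρ, _, hρ⟩ := exists_retraction hA (RQ.projective n) (φ n) (hφd n) (hRM n) (hRQ n) ih
      intro x hx h
      have h1 : φ n ((RM.d n).lin x) = 0 := by rw [← hφ, h, map_zero]
      have h2 : (RM.d n).lin x = 0 := by rw [← hρ ((RM.d n).lin x), h1, map_zero]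
      exact hzero (n + 1) x hx (exM n x h2)
  choose ρ hρd hρ using hret
  have hinj : ∀ n x, φ n x = 0 → x = 0 := fun n x h => by rw [← hρ n x, h, map_zero]
  -- `φ 0` is surjective
  have hφ0s : Function.Surjective (φ 0) := by
    rw [← LinearMap.range_eq_top, eq_top_iff]
    refine nakayama (RQ.fg 0) _ _ (isHomog_range (hφd 0)) ?_
    intro y _
    obtain ⟨m, hm⟩ := hπs (RQ.aug.lin y)
    obtain ⟨x, rfl⟩ := RM.aug_surj m
    rw [show y = φ 0 x + (y - φ 0 x) by abel]
    refine add_mem (Submodule.mem_sup_left ⟨x, rfl⟩) (Submodule.mem_sup_right ?_)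
    refine RQ.minimal 0 (exaQ _ ?_)
    rw [map_sub, hφ0, hm, sub_self]
  have hφρ0 : ∀ y, φ 0 (ρ 0 y) = y := by
    intro y
    obtain ⟨x, rfl⟩ := hφ0s y
    rw [hρ]
  -- the idempotents
  let e : ∀ n, (RQ.P n).M →ₗ[𝒜.A] (RQ.P n).M := fun n => LinearMap.id - φ n ∘ₗ ρ n
  have hev : ∀ n x, e n x = x - φ n (ρ n x) := fun n x => rfl
  have hed : ∀ n, IsDeg (e n) 0 := by
    intro n j x hx
    rw [hev]
    exact sub_mem (by simpa using hx) (((hφd n).comp0 (hρd n)) j x hx)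
  have heI : ∀ n, ∀ x ∈ LinearMap.range (φ n), e n x = 0 := by
    rintro n _ ⟨x, rfl⟩
    rw [hev, hρ, sub_self]
  have hfe : ∀ n (X : 𝒜.GMod) (f : (RQ.P n).M →ₗ[𝒜.A] X.M), (∀ x, f (φ n x) = 0) →
      ∀ x, f (e n x) = f x := by
    intro n X f hf x
    rw [hev, map_sub, hf, sub_zero]
  have key : ∀ n, ∃ ψ : (RQ.P (n + 1)).M →ₗ[𝒜.A] (RJ.P n).M, IsDeg ψ 0 ∧
      Function.Surjective ψ ∧ LinearMap.ker ψ = LinearMap.range (φ (n + 1)) ∧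
      (LinearMap.range (RQ.d (n + 1)).lin).map ψ = LinearMap.range (RJ.d n).lin := by
    intro n
    induction n with
    | zero =>
      obtain ⟨ε, hε⟩ := hJM
      have hmem : ∀ x, RM.aug.lin (ρ 0 ((RQ.d 0).lin x)) ∈
          𝒜.jideal • (⊤ : Submodule 𝒜.A M.M) := by
        intro x
        rw [← hπk, LinearMap.mem_ker, ← hφ0, hφρ0, adQ]
      let f : (RQ.P 1).M →ₗ[𝒜.A] JM.M := ε.symm.toLinearMap ∘ₗ
        LinearMap.codRestrict _ (RM.aug.lin ∘ₗ ρ 0 ∘ₗ (RQ.d 0).lin) hmem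
      have hfv : ∀ x, ((ε (f x) : _) : M.M) = RM.aug.lin (ρ 0 ((RQ.d 0).lin x)) := by
        intro x
        simp [f]
      have hf0 : ∀ x, f x = 0 ↔ RM.aug.lin (ρ 0 ((RQ.d 0).lin x)) = 0 := by
        intro x
        rw [← hfv]
        simp
      have hfd : IsDeg f 0 := by
        intro j x hx
        rw [hε, hfv]
        exact (RM.aug.isDeg.comp0 ((hρd 0).comp0 (RQ.d 0).isDeg)) j x hx
      have hfφ : ∀ x, f (φ 1 x) = 0 := by
        intro x
        rw [hf0, hφ 0, hρ, adM]
      have hfs : LinearMap.range f = ⊤ := by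
        rw [LinearMap.range_eq_top]
        intro y
        obtain ⟨z, hz⟩ := RM.aug_surj (ε y : M.M)
        have h1 : π (ε y : M.M) = 0 := by
          rw [← LinearMap.mem_ker, hπk]; exact (ε y).2
        obtain ⟨x, hx⟩ := exaQ (φ 0 z) (by rw [hφ0, hz, h1])
        refine ⟨x, ε.injective (Subtype.ext ?_)⟩
        rw [hfv, hx, hρ, hz]
      obtain ⟨ψ, h1, h2, h3, h4⟩ := quot_step (RQ.projective 1) (RQ.fg 1) (RJ.projective 0)
        (RJ.fg 0) f RJ.aug.lin hfd RJ.aug.isDeg (LinearMap.range (φ 1))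
        (LinearMap.range (RQ.d 1).lin) (isHomog_range (hφd 1)) (e 1) (hed 1) (heI 1)
        (hfe 1 _ f hfφ) (by rw [hfs, LinearMap.range_eq_top.2 RJ.aug_surj])
        (by rw [← RJ.exact_aug]; exact RJ.minimal 0) (RQ.minimal 1)
        (by
          rintro _ ⟨x, rfl⟩
          rw [LinearMap.mem_ker, hf0, ddQ, map_zero, map_zero])
        (by
          intro x hx
          rw [LinearMap.mem_ker, hf0] at hx
          obtain ⟨w, hw⟩ := exaM _ hx
          rw [show x = φ 1 w + (x - φ 1 w) by abel]
          refine add_mem (Submodule.mem_sup_left ⟨w, rfl⟩) (Submodule.mem_sup_right ?_)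
          refine exQ 0 _ ?_
          rw [map_sub, hφ 0, hw, hφρ0, sub_self])
      exact ⟨ψ, h1, h2, h3, by rw [h4, RJ.exact_aug]⟩
    | succ n ih =>
      obtain ⟨ψ, hψd, hψs, hψk, hψr⟩ := ih
      have hψφ : ∀ x, ψ (φ (n + 1) x) = 0 := by
        intro x
        rw [← LinearMap.mem_ker, hψk]; exact ⟨x, rfl⟩
      obtain ⟨ψ', h1, h2, h3, h4⟩ := quot_step (RQ.projective (n + 2)) (RQ.fg (n + 2))
        (RJ.projective (n + 1)) (RJ.fg (n + 1)) (ψ ∘ₗ (RQ.d (n + 1)).lin) (RJ.d n).lin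
        (hψd.comp0 (RQ.d (n + 1)).isDeg) (RJ.d n).isDeg (LinearMap.range (φ (n + 2)))
        (LinearMap.range (RQ.d (n + 2)).lin) (isHomog_range (hφd (n + 2))) (e (n + 2))
        (hed (n + 2)) (heI (n + 2))
        (hfe (n + 2) _ _ (fun x => by rw [LinearMap.comp_apply, hφ, hψφ]))
        (by rw [LinearMap.range_comp, hψr])
        (by rw [← RJ.exact]; exact RJ.minimal (n + 1)) (RQ.minimal (n + 2))
        (by
          rintro _ ⟨x, rfl⟩
          rw [LinearMap.mem_ker, LinearMap.comp_apply, ddQ, map_zero])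
        (by
          intro x hx
          have hx' : (RQ.d (n + 1)).lin x ∈ LinearMap.range (φ (n + 1)) := by
            rw [← hψk]; exact hx
          obtain ⟨z, hz⟩ := hx'
          have hdz : (RM.d n).lin z = 0 := by
            apply hinj
            rw [← hφ, hz, ddQ]
          obtain ⟨w, rfl⟩ := exM n z hdz
          rw [show x = φ (n + 2) w + (x - φ (n + 2) w) by abel]
          refine add_mem (Submodule.mem_sup_left ⟨w, rfl⟩) (Submodule.mem_sup_right ?_)
          refine exQ (n + 1) _ ?_
          rw [map_sub, hφ, hz, sub_self])
      exact ⟨ψ', h1, h2, h3, by rw [h4, RJ.exact]⟩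
  obtain ⟨ψ, h1, h2, h3, _⟩ := key n
  exact ⟨φ (n + 1), ρ (n + 1), ψ, hρ (n + 1), h1, h2, h3⟩

end GradedAlg

open GradedAlg in
/-- Let `A` be piecewise-Koszul and `M` a piecewise-Koszul module generated in degree `s`.
Then for every `n ≥ 1` there is an exact sequence
`0 → Ext^{n−1}_A(JM,A_0) → Ext^n_A(M/JM,A_0) → Ext^n_A(M,A_0) → 0`
and, in the shift-grading, all three modules are concentrated in degree `δ^d_p(n)+s`. -/
theorem ext_exact_sequence_of_radical
    {F : Type} [Field F] (𝒜 : GradedAlg F) (hA : 𝒜.Standing)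
    (p d : ℕ) (hp : 2 ≤ p) (hpd : p ≤ d)
    (T : 𝒜.GMod) (hT : IsTrivialGMod T) (hpk : 𝒜.IsPKAlg p d T)
    (M : 𝒜.GMod) (hfg : Module.Finite 𝒜.A M.M) (s : ℤ)
    (hMs : M.GenInDeg s) (hMpk : 𝒜.IsPKMod p d s M)
    (JM Q : 𝒜.GMod) (hJM : IsJM M JM) (hQ : IsQuotJM M Q)
    (RJ : MinRes JM) (RQ : MinRes Q) (RM : MinRes M)
    (n : ℕ) (hn : 1 ≤ n) :
    ∃ (α : ExtQ T RJ (n - 1) →ₗ[F] ExtQ T RQ n) (β : ExtQ T RQ n →ₗ[F] ExtQ T RM n),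
      Function.Injective α ∧ Function.Surjective β ∧
      LinearMap.range α = LinearMap.ker β ∧
      extComp T RJ (n - 1) ((jump d p n : ℤ) + s) = ⊤ ∧
      extComp T RQ n ((jump d p n : ℤ) + s) = ⊤ ∧
      extComp T RM n ((jump d p n : ℤ) + s) = ⊤ := by
  obtain ⟨RT, hRT⟩ := hpk
  obtain ⟨R, hR⟩ := hMpk
  obtain ⟨m, rfl⟩ : ∃ m, n = m + 1 := ⟨n - 1, by omega⟩
  obtain ⟨ε, hε⟩ := hQ
  let π : M.M →ₗ[𝒜.A] Q.M :=
    ε.symm.toLinearMap ∘ₗ (𝒜.jideal • (⊤ : Submodule 𝒜.A M.M)).mkQ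
  have hπd : IsDeg π 0 := by
    intro j x hx
    rw [add_zero, hε j]
    exact ⟨x, hx, rfl⟩
  have hπs : Function.Surjective π :=
    ε.symm.surjective.comp (Submodule.mkQ_surjective _)
  have hπk : LinearMap.ker π = 𝒜.jideal • (⊤ : Submodule 𝒜.A M.M) := by
    ext x
    simp [π]
  have hQfin : Module.Finite 𝒜.A Q.M := Module.Finite.of_surjective π hπs
  have hQk : ∀ a ∈ 𝒜.jideal, ∀ v : Q.M, a • v = 0 := by
    intro a ha v
    apply ε.injective
    rw [map_smul, quot_killed a ha, map_zero]
  have hQ0 : ∀ j, j ≠ s → ∀ x ∈ Q.grading j, x = 0 := by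
    intro j hj x hx
    rw [hε j] at hx
    obtain ⟨y, hy, rfl⟩ := hx
    have h1 := sub_pr_mem_J hMs y
    rw [M.pr_other hy hj, sub_zero, ← hπk] at h1
    exact h1
  have hQs : ∀ x : Q.M, x ∈ Q.grading s := by
    intro x
    refine Q.ind (C := fun x => x ∈ Q.grading s) ?_ (fun x y hx hy => add_mem hx hy) x
    intro j x hx
    by_cases hj : j = s
    · rwa [hj] at hx
    · rw [hQ0 j hj x hx]; exact zero_mem _
  obtain ⟨k, r, i, hri⟩ := exists_dual hA hT hQfin hQk
  have hrd : ∀ l, IsDeg (r l) s := by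
    intro l j x hx
    by_cases hj : j = 0
    · rw [hj, zero_add]; exact hQs _
    · rw [hT.1 j hj, Submodule.mem_bot] at hx
      rw [hx, map_zero]; exact zero_mem _
  have hid : ∀ l, IsDeg (i l) (-s) := by
    intro l j x hx
    by_cases hj : j = s
    · rw [hj, add_neg_cancel]; exact T_concentrated hT _
    · rw [hQ0 j hj x hx, map_zero]; exact zero_mem _
  have hRQ : ∀ n, (RQ.P n).GenInDeg ((jump d p n : ℤ) + s) := fun n => by
    have := gen_of_summand RT RQ r i hrd hid hri n (hRT n)
    rwa [add_zero] at this
  have hRM : ∀ n, (RM.P n).GenInDeg ((jump d p n : ℤ) + s) := fun n => by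
    have hI : IsDeg (LinearMap.id : M.M →ₗ[𝒜.A] M.M) 0 := by
      intro j x hx
      simpa using hx
    have := gen_of_summand (k := 1) (s := 0) R RM (fun _ => LinearMap.id) (fun _ => LinearMap.id)
      (fun _ => hI) (fun _ => by simpa using hI) (fun x => by simp) n (hR n)
    rwa [add_zero] at this
  obtain ⟨φ, ρ, ψ, hρ, hψd, hψs, hψk⟩ := main_terms hA hMs hJM π hπd hπs hπk RJ RQ RM
    (fun n => (jump d p n : ℤ) + s) (by simp [jump]) hRM hRQ m
  have hRJ : (RJ.P m).GenInDeg ((jump d p (m + 1) : ℤ) + s) := by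
    have := gen_of_surj (hRQ (m + 1)) (fun _ : Unit => ψ) (fun _ => hψd)
      (by rw [iSup_const, LinearMap.range_eq_top]; exact hψs)
    rwa [add_zero] at this
  let EJ := extEquiv hT RJ m
  let EQ := extEquiv hT RQ (m + 1)
  let EM := extEquiv hT RM (m + 1)
  let α' : HomSp T RJ m →ₗ[F] HomSp T RQ (m + 1) := precompF T ψ
  let β' : HomSp T RQ (m + 1) →ₗ[F] HomSp T RM (m + 1) := precompF T φ
  have hα : Function.Injective α' := by
    intro f g hfg
    ext y
    obtain ⟨x, rfl⟩ := hψs y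
    exact LinearMap.congr_fun hfg x
  have hβ : Function.Surjective β' := by
    intro f
    refine ⟨f ∘ₗ ρ, ?_⟩
    ext x
    exact congrArg f (hρ x)
  have hψφ : ∀ x, ψ (φ x) = 0 := by
    intro x
    rw [← LinearMap.mem_ker, hψk]; exact ⟨x, rfl⟩
  have hαβ : ∀ f : HomSp T RQ (m + 1), β' f = 0 ↔ ∃ g, α' g = f := by
    intro f
    constructor
    · intro hf
      have hle : LinearMap.ker ψ ≤ LinearMap.ker f := by
        rw [hψk]
        rintro _ ⟨x, rfl⟩
        exact LinearMap.congr_fun hf x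
      refine ⟨(LinearMap.ker ψ).liftQ f hle ∘ₗ
        (ψ.quotKerEquivOfSurjective hψs).symm.toLinearMap, ?_⟩
      ext x
      change (LinearMap.ker ψ).liftQ f hle ((ψ.quotKerEquivOfSurjective hψs).symm (ψ x)) = f x
      have : (ψ.quotKerEquivOfSurjective hψs).symm (ψ x) = Submodule.Quotient.mk x := by
        rw [LinearEquiv.symm_apply_eq]; rfl
      rw [this, Submodule.liftQ_apply]
    · rintro ⟨g, rfl⟩
      ext x
      change g (ψ (φ x)) = 0
      rw [hψφ, map_zero]
  refine ⟨EQ.symm.toLinearMap ∘ₗ α' ∘ₗ EJ.toLinearMap, EM.symm.toLinearMap ∘ₗ β' ∘ₗ EQ.toLinearMap,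
    EQ.symm.injective.comp (hα.comp EJ.injective), EM.symm.surjective.comp (hβ.comp EQ.surjective),
    ?_, extComp_eq_top hT RJ m hRJ, extComp_eq_top hT RQ _ (hRQ _), extComp_eq_top hT RM _ (hRM _)⟩
  ext x
  constructor
  · rintro ⟨y, rfl⟩
    change EM.symm (β' (EQ (EQ.symm (α' (EJ y))))) = 0
    rw [EQ.apply_symm_apply, (hαβ _).2 ⟨_, rfl⟩, map_zero]
  · intro hx
    have hx' : EM.symm (β' (EQ x)) = 0 := hx
    rw [LinearEquiv.map_eq_zero_iff, hαβ] at hx'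
    obtain ⟨g, hg⟩ := hx'
    refine ⟨EJ.symm g, ?_⟩
    change EQ.symm (α' (EJ (EJ.symm g))) = x
    rw [EJ.apply_symm_apply, hg, EQ.symm_apply_apply]
end
end
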